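/- arXiv:1208.3366 — 9 statements merged into one kernel-verified Lean document; each statement's English description precedes it below -/
import Mathlib

section
/- Let p > 3 be a prime and let a, b be nonzero elements of 𝔽_p. Then the number of roots of the polynomial x³ + a·x − b in 𝔽_p, counted with multiplicity, equals 3 if D·u_{p−2}² = 0, equals 0 if D·u_{p−2}² = 9a², and equals 1 otherwise (and the two conditions D·u_{p−2}² = 0 and D·u_{p−2}² = 9a² are mutually exclusive since a ≠ 0 and p > 3). -/
open Polynomial

/-!
Let `σ : x ↦ x ^ q` be the Frobenius of the finite field `K` with `q` elements, acting on the
three roots `r, s, t` of the cubic in an algebraic closure. The roots lying in `K` are the fixed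
points of `σ`, so their number is 3, 1 or 0 according to whether `σ` acts as the identity, a
transposition or a 3-cycle. Since `u n` is the complete homogeneous symmetric polynomial of degree
`n` in the roots, the bialternant formula expresses `D * u (q - 2) ^ 2` as the square of
`σ r * (s - t) - σ s * (r - t) + σ t * (r - s)`, which equals `0`, `3 * r * (s - t)` or `-3 * a`
in the three cases.
-/

theorem triple_eq_triple_iff {α : Type*} {x y z x' y' z' : α} :
    ({x, y, z} : Multiset α) = {x', y', z'} ↔
      (x = x' ∧ y = y' ∧ z = z') ∨ (x = y' ∧ y = x' ∧ z = z') ∨ (x = z' ∧ y = y' ∧ z = x') ∨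
        (x = y' ∧ y = z' ∧ z = x') ∨ (x = z' ∧ y = x' ∧ z = y') ∨ (x = x' ∧ y = z' ∧ z = y') := by
  change (([x, y, z] : List α) : Multiset α) = ([x', y', z'] : List α) ↔ _
  rw [Multiset.coe_eq_coe, ← List.mem_permutations]
  simp [List.permutations, List.permutationsAux, List.permutationsAux.rec, List.permutationsAux2]

theorem exists_relabelling_of_map_eq_self {α : Type*} {f : α → α} {x y z : α}
    (h : ({x, y, z} : Multiset α).map f = {x, y, z}) :
    ∃ r s t : α, ({x, y, z} : Multiset α) = {r, s, t} ∧
      ((f r = r ∧ f s = s ∧ f t = t) ∨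
        (f r = r ∧ f s = t ∧ f t = s ∧ s ≠ t) ∨
        (f r = s ∧ f s = t ∧ f t = r ∧ r ≠ s ∧ s ≠ t ∧ t ≠ r)) := by
  replace h : ({f x, f y, f z} : Multiset α) = {x, y, z} := h
  simp only [triple_eq_triple_iff] at h ⊢
  rcases h with hid | hxy | hxz | hxyz | hxzy | hyz
  · exact ⟨x, y, z, by grind⟩
  · exact ⟨z, x, y, by grind⟩
  · exact ⟨y, z, x, by grind⟩
  · exact ⟨x, y, z, by grind⟩
  · exact ⟨x, z, y, by grind⟩
  · exact ⟨x, y, z, by grind⟩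

section Vieta

variable {R : Type*} [CommRing R]

/-- `r, s, t` are the roots, with multiplicity, of `X ^ 3 + a * X - b`, expressed by Vieta's
formulas. -/
structure IsVietaTriple (a b r s t : R) : Prop where
  sum_eq_zero : r + s + t = 0
  sum_mul_eq : r * s + r * t + s * t = a
  prod_eq : r * s * t = b

/-- The determinant of the matrix with rows `(r ^ n, s ^ n, t ^ n)`, `(r, s, t)`, `(1, 1, 1)`,
the numerator of the bialternant formula. For `n = 2` it is the Vandermonde determinant. -/
def alternant (r s t : R) (n : ℕ) : R :=
  r ^ n * (s - t) - s ^ n * (r - t) + t ^ n * (r - s)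

variable {a b r s t : R} {n : ℕ}

theorem alternant_of_fixed (hr : r ^ n = r) (hs : s ^ n = s) (ht : t ^ n = t) :
    alternant r s t n = 0 := by
  rw [alternant, hr, hs, ht]
  ring

namespace IsVietaTriple

theorem alternant_add_three (h : IsVietaTriple a b r s t) (n : ℕ) :
    alternant r s t (n + 3) = b * alternant r s t n - a * alternant r s t (n + 1) := by
  obtain ⟨hsum, rfl, rfl⟩ := h
  obtain rfl : t = -r - s := by linear_combination hsum
  simp only [alternant]
  ring

theorem sq_alternant_two (h : IsVietaTriple a b r s t) :
    alternant r s t 2 ^ 2 = -4 * a ^ 3 - 27 * b ^ 2 := by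
  obtain ⟨hsum, rfl, rfl⟩ := h
  obtain rfl : t = -r - s := by linear_combination hsum
  simp only [alternant]
  ring

theorem alternant_two_mul (h : IsVietaTriple a b r s t) {u : ℕ → R}
    (hu1 : u 1 = 0) (hu2 : u 2 = -a) (hu3 : u 3 = b)
    (hurec : ∀ n, 1 ≤ n → u (n + 3) = b * u n - a * u (n + 1)) :
    ∀ n, alternant r s t 2 * u (n + 1) = alternant r s t (n + 3)
  | 0 => by
    rw [hu1, h.alternant_add_three]
    simp only [alternant]
    ring
  | 1 => by
    rw [hu2, h.alternant_add_three]
    simp only [alternant]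
    ring
  | 2 => by
    rw [hu3, h.alternant_add_three, h.alternant_add_three]
    simp only [alternant]
    ring
  | n + 3 => by
    rw [show n + 3 + 1 = n + 1 + 3 by rfl, hurec (n + 1) n.succ_pos, h.alternant_add_three,
      ← h.alternant_two_mul hu1 hu2 hu3 hurec n, ← h.alternant_two_mul hu1 hu2 hu3 hurec (n + 1)]
    ring

theorem discr_mul_sq (h : IsVietaTriple a b r s t) {u : ℕ → R}
    (hu1 : u 1 = 0) (hu2 : u 2 = -a) (hu3 : u 3 = b)
    (hurec : ∀ n, 1 ≤ n → u (n + 3) = b * u n - a * u (n + 1)) (n : ℕ) :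
    (-4 * a ^ 3 - 27 * b ^ 2) * u (n + 1) ^ 2 = alternant r s t (n + 3) ^ 2 := by
  rw [← h.sq_alternant_two, ← mul_pow, h.alternant_two_mul hu1 hu2 hu3 hurec]

theorem alternant_of_transposition (h : IsVietaTriple a b r s t)
    (hr : r ^ n = r) (hs : s ^ n = t) (ht : t ^ n = s) :
    alternant r s t n = 3 * (r * (s - t)) := by
  rw [alternant, hr, hs, ht]
  linear_combination (t - s) * h.sum_eq_zero

theorem alternant_of_threeCycle (h : IsVietaTriple a b r s t)
    (hr : r ^ n = s) (hs : s ^ n = t) (ht : t ^ n = r) :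
    alternant r s t n = -3 * a := by
  rw [alternant, hr, hs, ht]
  linear_combination (r + s + t) * h.sum_eq_zero - 3 * h.sum_mul_eq

theorem sq_mul_sub_sub_sq (h : IsVietaTriple a b r s t) :
    (r * (s - t)) ^ 2 - a ^ 2 = -(s * t * (r - s) * (r - t)) := by
  obtain ⟨hsum, rfl, rfl⟩ := h
  obtain rfl : t = -r - s := by linear_combination hsum
  ring

theorem sq_mul_sub_ne_sq [IsDomain R] (h : IsVietaTriple a b r s t)
    (hs : s ≠ 0) (ht : t ≠ 0) (hrs : r ≠ s) (hrt : r ≠ t) : (r * (s - t)) ^ 2 ≠ a ^ 2 := by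
  rw [← sub_ne_zero, h.sq_mul_sub_sub_sq, neg_ne_zero]
  exact mul_ne_zero (mul_ne_zero (mul_ne_zero hs ht) (sub_ne_zero.mpr hrs)) (sub_ne_zero.mpr hrt)

theorem sq_three_mul_mul_sub_ne [IsDomain R] (h : IsVietaTriple a b r s t) (h3 : (3 : R) ≠ 0)
    (hs : s ≠ 0) (ht : t ≠ 0) (hrs : r ≠ s) (hrt : r ≠ t) :
    (3 * (r * (s - t))) ^ 2 ≠ 9 * a ^ 2 := by
  rw [mul_pow, show (9 : R) = 3 ^ 2 by norm_num]
  exact (mul_right_injective₀ (pow_ne_zero 2 h3)).ne (h.sq_mul_sub_ne_sq hs ht hrs hrt)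

end IsVietaTriple

end Vieta

theorem isVietaTriple_of_aroots_eq {F L : Type*} [Field F] [Field L] [Algebra F L] {a b : F}
    {r s t : L} (h : (X ^ 3 + C a * X - C b : F[X]).aroots L = {r, s, t}) :
    IsVietaTriple (algebraMap F L a) (algebraMap F L b) r s t := by
  let P : Cubic F := ⟨1, 0, a, -b⟩
  have hP : P.a ≠ 0 := one_ne_zero
  have hroots : (P.map (algebraMap F L)).roots = {r, s, t} := by
    rw [Cubic.map_roots, ← h, aroots]
    congr 2
    simp [P, Cubic.toPoly, sub_eq_add_neg]
  have hsum := Cubic.b_eq_three_roots hP hroots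
  have hpairs := Cubic.c_eq_three_roots hP hroots
  have hprod := Cubic.d_eq_three_roots hP hroots
  simp only [P, map_zero, map_one, map_neg, one_mul, neg_inj] at hsum hpairs hprod
  exact ⟨neg_eq_zero.mp hsum.symm, hpairs.symm, hprod.symm⟩

section FiniteField

variable {K L : Type*} [Field K] [Fintype K] [Field L] [Algebra K L]

local notation "q" => Fintype.card K

theorem mem_range_algebraMap_iff_pow_card_eq {x : L} :
    x ∈ (algebraMap K L).range ↔ x ^ q = x := by
  constructor
  · rintro ⟨y, rfl⟩
    rw [← map_pow, FiniteField.pow_card]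
  · intro hx
    have hsplits : (X ^ q - X : K[X]).Splits := by
      simpa using (FiniteField.isSplittingField_sub K K).splits
    refine hsplits.mem_range_of_isRoot
      (FiniteField.X_pow_card_sub_X_ne_zero K Fintype.one_lt_card) ?_
    simp [hx]

theorem card_roots_eq_card_filter_pow_card_eq [DecidableEq L] (f : K[X]) :
    f.roots.card = ((f.aroots L).filter (fun x ↦ x ^ q = x)).card := by
  classical
  rw [← f.roots.card_map (algebraMap K L),
    ← filter_roots_map_range_eq_map_roots (algebraMap K L).injective]
  simp only [mem_range_algebraMap_iff_pow_card_eq, aroots]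

theorem map_pow_card_aroots {f : K[X]} (hf : (f.map (algebraMap K L)).Splits) :
    (f.aroots L).map (· ^ q) = f.aroots L := by
  have hfrob := hf.roots_map (FiniteField.frobeniusAlgHom K L : L →+* L)
  rw [map_map, AlgHom.comp_algebraMap] at hfrob
  exact hfrob.symm

theorem exists_aroots_eq_triple_pow_card_cases {f : K[X]} (hf : (f.map (algebraMap K L)).Splits)
    (hdeg : f.natDegree = 3) :
    ∃ r s t : L, f.aroots L = {r, s, t} ∧
      ((r ^ q = r ∧ s ^ q = s ∧ t ^ q = t) ∨
        (r ^ q = r ∧ s ^ q = t ∧ t ^ q = s ∧ s ≠ t) ∨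
        (r ^ q = s ∧ s ^ q = t ∧ t ^ q = r ∧ r ≠ s ∧ s ≠ t ∧ t ≠ r)) := by
  have hcard : (f.aroots L).card = 3 := by
    rw [aroots, ← hf.natDegree_eq_card_roots, natDegree_map, hdeg]
  obtain ⟨x, y, z, hxyz⟩ := Multiset.card_eq_three.mp hcard
  rw [hxyz]
  exact exists_relabelling_of_map_eq_self (hxyz ▸ map_pow_card_aroots hf)

theorem exists_isVietaTriple_card_roots_cases [IsAlgClosed L] {a b : K} (h3 : (3 : K) ≠ 0)
    (hb : b ≠ 0) :
    ∃ r s t : L, IsVietaTriple (algebraMap K L a) (algebraMap K L b) r s t ∧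
      ((alternant r s t q ^ 2 = 0 ∧ (X ^ 3 + C a * X - C b : K[X]).roots.card = 3) ∨
        (alternant r s t q ^ 2 = algebraMap K L (9 * a ^ 2) ∧
          (X ^ 3 + C a * X - C b : K[X]).roots.card = 0) ∨
        (alternant r s t q ^ 2 ≠ 0 ∧
          alternant r s t q ^ 2 ≠ algebraMap K L (9 * a ^ 2) ∧
          (X ^ 3 + C a * X - C b : K[X]).roots.card = 1)) := by
  classical
  have hdeg : (X ^ 3 + C a * X - C b : K[X]).natDegree = 3 := by compute_degree!
  obtain ⟨r, s, t, hroots, haction⟩ :=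
    exists_aroots_eq_triple_pow_card_cases (L := L) (IsAlgClosed.splits _) hdeg
  have hrst := isVietaTriple_of_aroots_eq hroots
  have hL3 : (3 : L) ≠ 0 := by
    simpa only [map_ofNat] using (_root_.map_ne_zero (algebraMap K L)).mpr h3
  have ⟨⟨hr0, hs0⟩, ht0⟩ : (r ≠ 0 ∧ s ≠ 0) ∧ t ≠ 0 := by
    rw [← mul_ne_zero_iff, ← mul_ne_zero_iff, hrst.prod_eq]
    exact (_root_.map_ne_zero (algebraMap K L)).mpr hb
  refine ⟨r, s, t, hrst, ?_⟩
  rw [map_mul, map_pow, map_ofNat, card_roots_eq_card_filter_pow_card_eq (L := L), hroots]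
  rcases haction with ⟨hr, hs, ht⟩ | ⟨hr, hs, ht, hst⟩ | ⟨hr, hs, ht, hrs, hst, htr⟩
  · left
    rw [alternant_of_fixed hr hs ht]
    simp [hr, hs, ht, Multiset.filter_singleton]
  · right; right
    have hrs : r ≠ s := by rintro rfl; exact hst (hr.symm.trans hs)
    have hrt : r ≠ t := by rintro rfl; exact hst (ht.symm.trans hr)
    rw [hrst.alternant_of_transposition hr hs ht]
    refine ⟨?_, ?_, ?_⟩
    · exact pow_ne_zero 2 (mul_ne_zero hL3 (mul_ne_zero hr0 (sub_ne_zero.mpr hst)))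
    · exact hrst.sq_three_mul_mul_sub_ne hL3 hs0 ht0 hrs hrt
    · simp [hr, hs, ht, hst, hst.symm, Multiset.filter_singleton]
  · right; left
    rw [hrst.alternant_of_threeCycle hr hs ht]
    refine ⟨by ring, ?_⟩
    simp [hr, hs, ht, hrs.symm, hst.symm, htr.symm, Multiset.filter_singleton]

end FiniteField

theorem stmt_0_general {K : Type*} [Field K] [Fintype K] {q : ℕ} (hq : Fintype.card K = q)
    (hq2 : 2 < q) (h3 : (3 : K) ≠ 0)
    (a b : K) (ha : a ≠ 0) (hb : b ≠ 0)
    (u : ℕ → K) (hu1 : u 1 = 0) (hu2 : u 2 = -a) (hu3 : u 3 = b)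
    (hurec : ∀ n, 1 ≤ n → u (n + 3) = b * u n - a * u (n + 1))
    (D : K) (hD : D = -4 * a ^ 3 - 27 * b ^ 2) :
    (D * u (q - 2) ^ 2 = 0 → (X ^ 3 + C a * X - C b : K[X]).roots.card = 3) ∧
    (D * u (q - 2) ^ 2 = 9 * a ^ 2 → (X ^ 3 + C a * X - C b : K[X]).roots.card = 0) ∧
    (D * u (q - 2) ^ 2 ≠ 0 → D * u (q - 2) ^ 2 ≠ 9 * a ^ 2 →
      (X ^ 3 + C a * X - C b : K[X]).roots.card = 1) ∧
    ¬(D * u (q - 2) ^ 2 = 0 ∧ D * u (q - 2) ^ 2 = 9 * a ^ 2) := by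
  let φ := algebraMap K (AlgebraicClosure K)
  obtain ⟨r, s, t, hrst, hcases⟩ :=
    exists_isVietaTriple_card_roots_cases (L := AlgebraicClosure K) (a := a) h3 hb
  have halternant : φ (D * u (q - 2) ^ 2) = alternant r s t q ^ 2 := by
    obtain ⟨n, rfl⟩ := Nat.exists_eq_add_of_le' hq2
    have hdiscr := hrst.discr_mul_sq (u := φ ∘ u)
      (by simp [hu1]) (by simp [hu2, φ]) (by simp [hu3, φ])
      (fun n hn ↦ by simp [hurec n hn, φ]) n
    simpa [hD, φ, map_ofNat] using hdiscr
  have h9a : 9 * a ^ 2 ≠ 0 := by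
    rw [show 9 * a ^ 2 = (3 * a) ^ 2 by ring]
    exact pow_ne_zero 2 (mul_ne_zero h3 ha)
  rw [hq, ← halternant, map_eq_zero, φ.injective.eq_iff] at hcases
  grind

/-- For a prime `p > 3` and nonzero `a b : 𝔽_p`, the number of roots of
`x³ + a·x − b` counted with multiplicity is 3 if `D·u_{p−2}² = 0`, 0 if `D·u_{p−2}² = 9a²`,
and 1 otherwise; moreover these two conditions are mutually exclusive. -/
theorem stmt_0 (p : ℕ) [Fact p.Prime] (hp : 3 < p)
    (a b : ZMod p) (ha : a ≠ 0) (hb : b ≠ 0)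
    (u : ℕ → ZMod p) (hu1 : u 1 = 0) (hu2 : u 2 = -a) (hu3 : u 3 = b)
    (hurec : ∀ n, 1 ≤ n → u (n + 3) = b * u n - a * u (n + 1))
    (D : ZMod p) (hD : D = -4 * a ^ 3 - 27 * b ^ 2) :
    (D * u (p - 2) ^ 2 = 0 →
      ((X ^ 3 + C a * X - C b : (ZMod p)[X]).roots).card = 3) ∧
    (D * u (p - 2) ^ 2 = 9 * a ^ 2 →
      ((X ^ 3 + C a * X - C b : (ZMod p)[X]).roots).card = 0) ∧
    (D * u (p - 2) ^ 2 ≠ 0 → D * u (p - 2) ^ 2 ≠ 9 * a ^ 2 →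
      ((X ^ 3 + C a * X - C b : (ZMod p)[X]).roots).card = 1) ∧
    ¬(D * u (p - 2) ^ 2 = 0 ∧ D * u (p - 2) ^ 2 = 9 * a ^ 2) := by
  have h3 : ((3 : ℕ) : ZMod p) ≠ 0 := by
    rw [Ne, ZMod.natCast_eq_zero_iff]
    exact Nat.not_dvd_of_pos_of_lt three_pos hp
  exact stmt_0_general (ZMod.card p) (by lia) h3 a b ha hb u hu1 hu2 hu3 hurec D hD
end

section
/- Let p > 3 be a prime, let a, b be nonzero elements of 𝔽_p, and suppose D·u_{p−2}² = 0. Then the equation x³ + a·x = b has three pairwise distinct solutions in 𝔽_p if and only if D ≠ 0; moreover, when D ≠ 0, every solution x ∈ 𝔽_p satisfies 3x² + a ≠ 0. -/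
/-!
Modulo `X³ + aX - b`, the coefficient of `X²` in the remainder of `Xⁿ` is `u (n - 2)`. Hence
`u (q - 2) = 0` means that the `q`-power Frobenius acts on the three roots in an algebraic closure
of `𝔽_q` as an affine map `r ↦ αr + β`. The roots have sum zero, so applying Frobenius to their sum
gives `3β = 0`, i.e. `β = 0`; since `αr` and `αs` are again roots for two distinct roots `r`, `s`,
comparing coefficients gives `α³ = 1` and `α = α³`. So Frobenius fixes the roots, which therefore
lie in `𝔽_q`.
-/

open Polynomial

section Recurrence

variable {R A : Type*} [CommRing R] [CommRing A] [Algebra R A] {a b : R} {u : ℕ → R}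

theorem pow_add_three_eq_of_recurrence (hu1 : u 1 = 0) (hu2 : u 2 = -a) (hu3 : u 3 = b)
    (hurec : ∀ n, 1 ≤ n → u (n + 3) = b * u n - a * u (n + 1)) {r : A}
    (hr : r ^ 3 + algebraMap R A a * r = algebraMap R A b) (n : ℕ) :
    r ^ (n + 3) = algebraMap R A (u (n + 1)) * r ^ 2 + algebraMap R A (u (n + 2)) * r
      + algebraMap R A (u (n + 3) + a * u (n + 1)) := by
  induction n with
  | zero =>
    simp only [zero_add, hu1, hu2, hu3, map_zero, map_neg, mul_zero, add_zero]
    linear_combination hr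
  | succ n ih =>
    have hstep : u (n + 4) = b * u (n + 1) - a * u (n + 2) := hurec (n + 1) n.succ_pos
    rw [add_right_comm, pow_succ, ih, show n + 1 + 3 = n + 4 from rfl, hstep]
    simp only [map_add, map_sub, map_mul]
    linear_combination algebraMap R A (u (n + 1)) * hr

end Recurrence

section DepressedCubic

/-- The cubic `X³ + aX - b`, whose roots are the solutions of `x³ + ax = b`. -/
def depressedCubic {R : Type*} [Ring R] (a b : R) : Cubic R := ⟨1, 0, a, -b⟩

theorem discr_depressedCubic {R : Type*} [CommRing R] (a b : R) :
    (depressedCubic a b).discr = -4 * a ^ 3 - 27 * b ^ 2 := by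
  simp only [depressedCubic, Cubic.discr]
  ring

theorem discr_depressedCubic_eq_deriv_sq_mul {R : Type*} [CommRing R] {a b x : R}
    (hx : x ^ 3 + a * x = b) :
    (depressedCubic a b).discr = (3 * x ^ 2 + a) ^ 2 * (-3 * x ^ 2 - 4 * a) := by
  rw [discr_depressedCubic, ← hx]
  ring

theorem depressedCubic_a_ne_zero {R : Type*} [Ring R] [Nontrivial R] {a b : R} :
    (depressedCubic a b).a ≠ 0 := one_ne_zero

theorem mem_roots_map_depressedCubic {R K : Type*} [CommRing R] [CommRing K] [IsDomain K]
    (φ : R →+* K) {a b : R} {x : K} :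
    x ∈ ((depressedCubic a b).map φ).roots ↔ x ^ 3 + φ a * x = φ b := by
  have hne : ((depressedCubic a b).map φ).toPoly ≠ 0 :=
    Cubic.ne_zero_of_a_ne_zero (by simp [Cubic.map, depressedCubic])
  rw [Cubic.mem_roots_iff hne]
  simp [Cubic.map, depressedCubic, ← sub_eq_add_neg, sub_eq_zero]

variable {F K : Type*} [Field F] [Field K] {a b : F}

theorem roots_map_depressedCubic_eq (φ : F →+* K) {x y z : K}
    (hxy : x ≠ y) (hxz : x ≠ z) (hyz : y ≠ z) (hx : x ^ 3 + φ a * x = φ b)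
    (hy : y ^ 3 + φ a * y = φ b) (hz : z ^ 3 + φ a * z = φ b) :
    ((depressedCubic a b).map φ).roots = {x, y, z} := by
  have hnodup : ({x, y, z} : Multiset K).Nodup := by simp [hxy, hxz, hyz]
  have hsub : ({x, y, z} : Multiset K) ⊆ ((depressedCubic a b).map φ).roots := by
    simp [Multiset.insert_eq_cons, Multiset.cons_subset, mem_roots_map_depressedCubic, hx, hy, hz]
  refine (Multiset.eq_of_le_of_card_le ((Multiset.le_iff_subset hnodup).2 hsub) ?_).symm
  calc ((depressedCubic a b).map φ).roots.card
    _ ≤ ((depressedCubic a b).map φ).toPoly.natDegree := card_roots' _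
    _ = 3 := Cubic.natDegree_of_a_ne_zero ((map_ne_zero φ).2 depressedCubic_a_ne_zero)

theorem exists_distinct_solutions_iff_splits_and_discr_ne_zero :
    (∃ x y z : F, x ≠ y ∧ x ≠ z ∧ y ≠ z ∧
        x ^ 3 + a * x = b ∧ y ^ 3 + a * y = b ∧ z ^ 3 + a * z = b) ↔
      (depressedCubic a b).toPoly.Splits ∧ (depressedCubic a b).discr ≠ 0 := by
  have hsplits := Cubic.splits_iff_roots_eq_three (φ := RingHom.id F)
    (depressedCubic_a_ne_zero (a := a) (b := b))
  rw [Polynomial.map_id] at hsplits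
  rw [hsplits]
  constructor
  · rintro ⟨x, y, z, hxy, hxz, hyz, hx, hy, hz⟩
    have hroots := roots_map_depressedCubic_eq (RingHom.id F) hxy hxz hyz hx hy hz
    exact ⟨⟨x, y, z, hroots⟩,
      (Cubic.discr_ne_zero_iff_roots_ne depressedCubic_a_ne_zero hroots).2 ⟨hxy, hxz, hyz⟩⟩
  · rintro ⟨⟨x, y, z, hroots⟩, hdiscr⟩
    obtain ⟨hxy, hxz, hyz⟩ :=
      (Cubic.discr_ne_zero_iff_roots_ne depressedCubic_a_ne_zero hroots).1 hdiscr
    have hsol : ∀ w ∈ ({x, y, z} : Multiset F), w ^ 3 + a * w = b := fun w hw ↦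
      (mem_roots_map_depressedCubic (RingHom.id F)).1 (hroots ▸ hw)
    exact ⟨x, y, z, hxy, hxz, hyz, hsol x (by simp), hsol y (by simp), hsol z (by simp)⟩

end DepressedCubic

section AffineAction

variable {K : Type*} [CommRing K] [IsDomain K] {α β r s t : K}

theorem translation_eq_zero_of_map_eq_affine (σ : K →+ K) (h3 : (3 : K) ≠ 0)
    (hsum : r + s + t = 0) (hr : σ r = α * r + β) (hs : σ s = α * s + β) (ht : σ t = α * t + β) :
    β = 0 := by
  have hσsum : σ r + σ s + σ t = 0 := by rw [← map_add, ← map_add, hsum, map_zero]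
  refine (mul_eq_zero.1 ?_).resolve_left h3
  linear_combination hσsum - hr - hs - ht - α * hsum

theorem multiplier_eq_one_of_map_eq_mul (σ : K →+* K) {a b : K} (ha : a ≠ 0) (hb : b ≠ 0)
    (hσa : σ a = a) (hσb : σ b = b) (hrs : r ≠ s)
    (hr : r ^ 3 + a * r = b) (hs : s ^ 3 + a * s = b) (hσr : σ r = α * r) (hσs : σ s = α * s) :
    α = 1 := by
  have hlinear {x : K} (hx : x ^ 3 + a * x = b) (hσx : σ x = α * x) :
      a * (α - α ^ 3) * x = b * (1 - α ^ 3) := by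
    have hσ := congrArg σ hx
    simp only [map_add, map_mul, map_pow, hσx, hσa, hσb] at hσ
    linear_combination hσ - α ^ 3 * hx
  have hslope : a * (α - α ^ 3) = 0 := by
    refine (mul_eq_zero.1 ?_).resolve_right (sub_ne_zero.2 hrs)
    linear_combination hlinear hr hσr - hlinear hs hσs
  have hcube : 1 - α ^ 3 = 0 := by
    refine (mul_eq_zero.1 ?_).resolve_left hb
    linear_combination r * hslope - hlinear hr hσr
  linear_combination (mul_eq_zero.1 hslope).resolve_left ha - hcube

end AffineAction

section FiniteField

variable {F : Type*} [Field F] [Fintype F]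

theorem mem_range_algebraMap_of_pow_card_eq_self {K : Type*} [Field K] [Algebra F K] {x : K}
    (hx : x ^ Fintype.card F = x) : x ∈ (algebraMap F K).range := by
  have hsplits : (X ^ Fintype.card F - X : F[X]).Splits := by
    simpa using IsSplittingField.splits F (X ^ Fintype.card F - X : F[X])
  exact hsplits.mem_range_of_isRoot
    (FiniteField.X_pow_card_sub_X_ne_zero F Fintype.one_lt_card) (by simp [hx])

theorem splits_depressedCubic_of_pow_card_eq_affine {K : Type*} [Field K] [IsAlgClosed K]
    [Algebra F K] {a b : F} (h3 : (3 : F) ≠ 0) (ha : a ≠ 0) (hb : b ≠ 0)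
    (hdiscr : (depressedCubic a b).discr ≠ 0) {α β : K}
    (haffine : ∀ r : K, r ^ 3 + algebraMap F K a * r = algebraMap F K b →
      r ^ Fintype.card F = α * r + β) :
    (depressedCubic a b).toPoly.Splits := by
  set φ := algebraMap F K
  have hsplits := IsAlgClosed.splits ((depressedCubic a b).toPoly.map φ)
  obtain ⟨r, s, t, hroots⟩ :=
    (Cubic.splits_iff_roots_eq_three depressedCubic_a_ne_zero).1 hsplits
  have hrs : r ≠ s :=
    ((Cubic.discr_ne_zero_iff_roots_ne depressedCubic_a_ne_zero hroots).1 hdiscr).1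
  have hsum : r + s + t = 0 := by
    simpa [depressedCubic, eq_comm, -neg_add_rev] using
      Cubic.b_eq_three_roots depressedCubic_a_ne_zero hroots
  have hsol : ∀ x ∈ ({r, s, t} : Multiset K), x ^ 3 + φ a * x = φ b := fun x hx ↦
    (mem_roots_map_depressedCubic φ).1 (hroots ▸ hx)
  have hr := hsol r (by simp)
  have hs := hsol s (by simp)
  have ht := hsol t (by simp)
  let σ := FiniteField.frobeniusAlgHom F K
  obtain rfl : β = 0 := translation_eq_zero_of_map_eq_affine (σ : K →+ K)
    (map_ofNat φ 3 ▸ (map_ne_zero φ).2 h3) hsum (haffine r hr) (haffine s hs) (haffine t ht)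
  simp only [add_zero] at haffine
  obtain rfl : α = 1 := multiplier_eq_one_of_map_eq_mul (σ : K →+* K) ((map_ne_zero φ).2 ha)
    ((map_ne_zero φ).2 hb) (σ.commutes a) (σ.commutes b) hrs hr hs (haffine r hr) (haffine s hs)
  refine Splits.of_splits_map φ hsplits fun x hx ↦ ?_
  rw [← Cubic.map_roots] at hx
  apply mem_range_algebraMap_of_pow_card_eq_self
  rw [haffine x ((mem_roots_map_depressedCubic φ).1 hx), one_mul]

theorem splits_depressedCubic_of_recurrence_eq_zero (h3 : (3 : F) ≠ 0) (hF : 2 < Fintype.card F)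
    {a b : F} (ha : a ≠ 0) (hb : b ≠ 0) {u : ℕ → F} (hu1 : u 1 = 0) (hu2 : u 2 = -a)
    (hu3 : u 3 = b) (hurec : ∀ n, 1 ≤ n → u (n + 3) = b * u n - a * u (n + 1))
    (hdiscr : (depressedCubic a b).discr ≠ 0) (hu : u (Fintype.card F - 2) = 0) :
    (depressedCubic a b).toPoly.Splits := by
  obtain ⟨n, hn⟩ := Nat.exists_eq_add_of_le' hF
  have hu' : u (n + 1) = 0 := by simpa [hn] using hu
  refine splits_depressedCubic_of_pow_card_eq_affine (K := AlgebraicClosure F) h3 ha hb hdiscr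
    (α := algebraMap F _ (u (n + 2))) (β := algebraMap F _ (u (n + 3))) fun r hr ↦ ?_
  rw [hn]
  simpa [hu'] using pow_add_three_eq_of_recurrence hu1 hu2 hu3 hurec hr n

theorem stmt_1_general (h3 : (3 : F) ≠ 0) (hF : 2 < Fintype.card F)
    (a b : F) (ha : a ≠ 0) (hb : b ≠ 0)
    (u : ℕ → F) (hu1 : u 1 = 0) (hu2 : u 2 = -a) (hu3 : u 3 = b)
    (hurec : ∀ n, 1 ≤ n → u (n + 3) = b * u n - a * u (n + 1))
    (D : F) (hD : D = -4 * a ^ 3 - 27 * b ^ 2)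
    (h0 : D * u (Fintype.card F - 2) ^ 2 = 0) :
    ((∃ x y z : F, x ≠ y ∧ x ≠ z ∧ y ≠ z ∧
        x ^ 3 + a * x = b ∧ y ^ 3 + a * y = b ∧ z ^ 3 + a * z = b) ↔ D ≠ 0) ∧
    (D ≠ 0 → ∀ x : F, x ^ 3 + a * x = b → 3 * x ^ 2 + a ≠ 0) := by
  rw [← discr_depressedCubic] at hD
  subst hD
  refine ⟨?_, fun hdiscr x hx hderiv ↦ ?_⟩
  · rw [exists_distinct_solutions_iff_splits_and_discr_ne_zero, and_iff_right_iff_imp]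
    intro hdiscr
    have hu : u (Fintype.card F - 2) = 0 := by simpa [hdiscr] using h0
    exact splits_depressedCubic_of_recurrence_eq_zero h3 hF ha hb hu1 hu2 hu3 hurec hdiscr hu
  · exact hdiscr (by rw [discr_depressedCubic_eq_deriv_sq_mul hx, hderiv]; ring)

end FiniteField

/-- For a prime `p > 3`, nonzero `a b : 𝔽_p`, with `D·u_{p−2}² = 0`:
the equation `x³ + a·x = b` has three pairwise distinct solutions iff `D ≠ 0`;
moreover when `D ≠ 0` every solution `x` satisfies `3x² + a ≠ 0`. -/
theorem stmt_1 (p : ℕ) [Fact p.Prime] (hp : 3 < p)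
    (a b : ZMod p) (ha : a ≠ 0) (hb : b ≠ 0)
    (u : ℕ → ZMod p) (hu1 : u 1 = 0) (hu2 : u 2 = -a) (hu3 : u 3 = b)
    (hurec : ∀ n, 1 ≤ n → u (n + 3) = b * u n - a * u (n + 1))
    (D : ZMod p) (hD : D = -4 * a ^ 3 - 27 * b ^ 2)
    (h0 : D * u (p - 2) ^ 2 = 0) :
    ((∃ x y z : ZMod p, x ≠ y ∧ x ≠ z ∧ y ≠ z ∧
        x ^ 3 + a * x = b ∧ y ^ 3 + a * y = b ∧ z ^ 3 + a * z = b) ↔ D ≠ 0) ∧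
    (D ≠ 0 → ∀ x : ZMod p, x ^ 3 + a * x = b → 3 * x ^ 2 + a ≠ 0) := by
  have h3 : (3 : ZMod p) ≠ 0 := fun h ↦
    Nat.not_dvd_of_pos_of_lt three_pos hp ((ZMod.natCast_eq_zero_iff 3 p).1 (by exact_mod_cast h))
  exact stmt_1_general h3 (by rw [ZMod.card]; lia) a b ha hb u hu1 hu2 hu3 hurec D hD
    (by rwa [ZMod.card])
end

section
/- Let p > 3 be a prime and let a, b be nonzero elements of 𝔽_p. If D·u_{p−2}² ≠ 0 and D·u_{p−2}² ≠ 9a², then every solution x ∈ 𝔽_p of the equation x³ + a·x = b satisfies 3x² + a ≠ 0. -/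
section Cubic

variable {R : Type*} [CommRing R] {P : Cubic R} {x : R}

theorem cubic_eval_toPoly (P : Cubic R) (x : R) :
    P.toPoly.eval x = P.a * x ^ 3 + P.b * x ^ 2 + P.c * x + P.d := by
  simp [Cubic.toPoly]

theorem cubic_eval_derivative_toPoly (P : Cubic R) (x : R) :
    P.toPoly.derivative.eval x = 3 * P.a * x ^ 2 + 2 * P.b * x + P.c := by
  simp only [Cubic.toPoly, Polynomial.derivative_add, Polynomial.derivative_C_mul,
    Polynomial.derivative_X_pow, Polynomial.derivative_X, Polynomial.derivative_C,
    Polynomial.eval_add, Polynomial.eval_mul, Polynomial.eval_C, Polynomial.eval_pow,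
    Polynomial.eval_X, Polynomial.eval_one, Polynomial.eval_zero]
  push_cast
  ring

/-- The last factor is the discriminant of the quadratic quotient of `P` by `X - x`. -/
theorem cubic_discr_eq_sq_eval_derivative_mul_discrim (hx : P.toPoly.IsRoot x) :
    P.discr = P.toPoly.derivative.eval x ^ 2 *
      discrim P.a (P.b + P.a * x) (P.c + P.b * x + P.a * x ^ 2) := by
  have hd : P.d = -(P.a * x ^ 3 + P.b * x ^ 2 + P.c * x) := by
    rw [Polynomial.IsRoot.def, cubic_eval_toPoly] at hx
    linear_combination hx
  rw [cubic_eval_derivative_toPoly, Cubic.discr, discrim, hd]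
  ring

theorem cubic_eval_derivative_ne_zero_of_discr_ne_zero (hP : P.discr ≠ 0)
    (hx : P.toPoly.IsRoot x) : P.toPoly.derivative.eval x ≠ 0 := by
  rw [cubic_discr_eq_sq_eval_derivative_mul_discrim hx] at hP
  exact ne_zero_pow two_ne_zero (left_ne_zero_of_mul hP)

end Cubic

theorem stmt_4_general {R : Type*} [CommRing R] {a b : R} (hD : -4 * a ^ 3 - 27 * b ^ 2 ≠ 0)
    (x : R) (hx : x ^ 3 + a * x = b) : 3 * x ^ 2 + a ≠ 0 := by
  let P : Cubic R := ⟨1, 0, a, -b⟩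
  have hdiscr : P.discr = -4 * a ^ 3 - 27 * b ^ 2 := by
    simp only [P, Cubic.discr]
    ring
  have hroot : P.toPoly.IsRoot x := by
    simp [P, cubic_eval_toPoly, hx]
  have hderiv : P.toPoly.derivative.eval x = 3 * x ^ 2 + a := by
    simp [P, cubic_eval_derivative_toPoly]
  rw [← hderiv]
  exact cubic_eval_derivative_ne_zero_of_discr_ne_zero (hdiscr ▸ hD) hroot

/-- For a prime `p > 3` and nonzero `a b : 𝔽_p`, if `D·u_{p−2}² ≠ 0` and
`D·u_{p−2}² ≠ 9a²`, then every solution `x` of `x³ + a·x = b` satisfies `3x² + a ≠ 0`. -/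
theorem stmt_4 (p : ℕ) [Fact p.Prime] (hp : 3 < p)
    (a b : ZMod p) (ha : a ≠ 0) (hb : b ≠ 0)
    (u : ℕ → ZMod p) (hu1 : u 1 = 0) (hu2 : u 2 = -a) (hu3 : u 3 = b)
    (hurec : ∀ n, 1 ≤ n → u (n + 3) = b * u n - a * u (n + 1))
    (D : ZMod p) (hD : D = -4 * a ^ 3 - 27 * b ^ 2)
    (h1 : D * u (p - 2) ^ 2 ≠ 0) (h2 : D * u (p - 2) ^ 2 ≠ 9 * a ^ 2) :
    ∀ x : ZMod p, x ^ 3 + a * x = b → 3 * x ^ 2 + a ≠ 0 :=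
  stmt_4_general (hD ▸ left_ne_zero_of_mul h1)
end

section
/- Let p > 3 be a prime and let a, b ∈ ℚ_p be nonzero with |a|_p < 1 and |b|_p = 1. Then the equation x³ + a·x = b has a solution x ∈ ℚ_p with |x|_p = 1 if and only if b_0^{(p−1)/gcd(3, p−1)} ≡ 1 (mod p). -/
/-!
Modulo `p` the equation `x ^ n + a * x = b` becomes `y ^ n = b₀`, and since `p ∤ n` and `b₀ ≠ 0`
every root `y` of the reduction is simple, so Hensel's lemma lifts it to a `p`-adic unit.
Solvability of `y ^ n = b₀` is decided in the cyclic group `(ZMod p)ˣ` of order `m = p - 1`, where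
the `n`-th powers and the elements killed by `m / gcd m n` are subgroups of the same order.
-/

open Polynomial

theorem range_powMonoidHom_eq_ker_card_div_gcd {G : Type*} [CommGroup G] [IsCyclic G] [Finite G]
    (n : ℕ) :
    (powMonoidHom n : G →* G).range =
      (powMonoidHom (Nat.card G / (Nat.card G).gcd n) : G →* G).ker := by
  have gcd_dvd : (Nat.card G).gcd n ∣ Nat.card G := Nat.gcd_dvd_left _ _
  have range_le_ker : (powMonoidHom n : G →* G).range ≤
      (powMonoidHom (Nat.card G / (Nat.card G).gcd n) : G →* G).ker := by
    rintro _ ⟨y, rfl⟩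
    obtain ⟨k, hk⟩ := Nat.gcd_dvd_right (Nat.card G) n
    have card_dvd : Nat.card G ∣ n * (Nat.card G / (Nat.card G).gcd n) :=
      ⟨k, by nth_rw 1 [hk]; rw [mul_right_comm, Nat.mul_div_cancel' gcd_dvd]⟩
    rw [MonoidHom.mem_ker, powMonoidHom_apply, powMonoidHom_apply, ← pow_mul]
    exact orderOf_dvd_iff_pow_eq_one.mp ((orderOf_dvd_natCard y).trans card_dvd)
  refine Subgroup.eq_of_le_of_card_ge range_le_ker ?_
  rw [IsCyclic.card_powMonoidHom_ker, IsCyclic.card_powMonoidHom_range,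
    Nat.gcd_eq_right (Nat.div_dvd_of_dvd gcd_dvd)]

theorem exists_pow_eq_iff_pow_card_div_gcd_eq_one {K : Type*} [Field K] [Finite K] {n : ℕ}
    (hn : n ≠ 0) {c : K} (hc : c ≠ 0) :
    (∃ y : K, y ^ n = c) ↔ c ^ ((Nat.card K - 1) / n.gcd (Nat.card K - 1)) = 1 := by
  have units_iff : (∃ y : K, y ^ n = c) ↔ ∃ u : Kˣ, u ^ n = Units.mk0 c hc := by
    refine ⟨fun ⟨y, hy⟩ ↦ ?_, fun ⟨u, hu⟩ ↦ ⟨u, by simpa using congrArg Units.val hu⟩⟩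
    have y_ne_zero : y ≠ 0 := ne_zero_pow hn (hy ▸ hc)
    exact ⟨Units.mk0 y y_ne_zero, Units.ext (by simpa using hy)⟩
  calc (∃ y : K, y ^ n = c)
    _ ↔ Units.mk0 c hc ∈ (powMonoidHom n : Kˣ →* Kˣ).range := units_iff
    _ ↔ Units.mk0 c hc ^ ((Nat.card K - 1) / n.gcd (Nat.card K - 1)) = 1 := by
      rw [range_powMonoidHom_eq_ker_card_div_gcd, MonoidHom.mem_ker, powMonoidHom_apply,
        Nat.card_units, Nat.gcd_comm]
    _ ↔ c ^ ((Nat.card K - 1) / n.gcd (Nat.card K - 1)) = 1 := by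
      simp [Units.ext_iff]

section PadicIntegers

variable {p : ℕ} [Fact p.Prime]

theorem toZMod_eq_zero_iff_norm_lt_one {x : ℤ_[p]} : PadicInt.toZMod x = 0 ↔ ‖x‖ < 1 := by
  rw [← RingHom.mem_ker, PadicInt.ker_toZMod, IsLocalRing.mem_maximalIdeal, PadicInt.mem_nonunits]

theorem toZMod_ne_zero_iff_norm_eq_one {x : ℤ_[p]} : PadicInt.toZMod x ≠ 0 ↔ ‖x‖ = 1 := by
  rw [Ne, toZMod_eq_zero_iff_norm_lt_one, not_lt, (PadicInt.norm_le_one x).ge_iff_eq]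

theorem exists_eval_eq_zero_of_simple_root_toZMod {f : ℤ_[p][X]} {y : ZMod p}
    (root : (f.map PadicInt.toZMod).eval y = 0)
    (simple : (f.map PadicInt.toZMod).derivative.eval y ≠ 0) :
    ∃ x : ℤ_[p], f.eval x = 0 ∧ PadicInt.toZMod x = y := by
  obtain ⟨z, rfl⟩ := ZMod.ringHom_surjective (PadicInt.toZMod (p := p)) y
  rw [eval_map_apply, toZMod_eq_zero_iff_norm_lt_one] at root
  rw [derivative_map, eval_map_apply, toZMod_ne_zero_iff_norm_eq_one] at simple
  have newton : ‖f.aeval z‖ < ‖f.derivative.aeval z‖ ^ 2 := by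
    simpa only [coe_aeval_eq_eval, simple, one_pow] using root
  obtain ⟨x, hx, x_near_z, -, -⟩ := hensels_lemma newton
  refine ⟨x, by simpa only [coe_aeval_eq_eval] using hx, ?_⟩
  rwa [coe_aeval_eq_eval, simple, ← toZMod_eq_zero_iff_norm_lt_one, map_sub, sub_eq_zero]
    at x_near_z

theorem exists_unit_eval_eq_zero_iff_exists_pow_eq {f : ℤ_[p][X]} {n : ℕ} (hn : ¬p ∣ n)
    {c : ZMod p} (hc : c ≠ 0) (reduction : f.map PadicInt.toZMod = X ^ n - C c) :
    (∃ x : ℤ_[p], ‖x‖ = 1 ∧ f.eval x = 0) ↔ ∃ y : ZMod p, y ^ n = c := by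
  constructor
  · rintro ⟨x, -, hx⟩
    have reduced_root := eval_map_apply PadicInt.toZMod x (p := f)
    rw [reduction, hx, map_zero] at reduced_root
    exact ⟨PadicInt.toZMod x, by simpa [sub_eq_zero] using reduced_root⟩
  · rintro ⟨y, hy⟩
    have n_ne_zero : (n : ZMod p) ≠ 0 := by rwa [Ne, ZMod.natCast_eq_zero_iff]
    have y_ne_zero : y ≠ 0 := ne_zero_pow (n := n) (fun h ↦ hn (h ▸ dvd_zero p)) (hy ▸ hc)
    have root : (f.map PadicInt.toZMod).eval y = 0 := by simp [reduction, hy]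
    have simple : (f.map PadicInt.toZMod).derivative.eval y ≠ 0 := by
      have derivative_eval : (f.map PadicInt.toZMod).derivative.eval y = n * y ^ (n - 1) := by
        simp [reduction, derivative_X_pow]
      rw [derivative_eval]
      exact mul_ne_zero n_ne_zero (pow_ne_zero _ y_ne_zero)
    obtain ⟨x, hx, rfl⟩ := exists_eval_eq_zero_of_simple_root_toZMod root simple
    exact ⟨x, toZMod_ne_zero_iff_norm_eq_one.mp y_ne_zero, hx⟩

theorem exists_unit_pow_add_mul_eq_iff_exists_pow_eq {n : ℕ} (hn : ¬p ∣ n) {a b : ℤ_[p]}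
    (ha : ‖a‖ < 1) (hb : ‖b‖ = 1) :
    (∃ x : ℤ_[p], ‖x‖ = 1 ∧ x ^ n + a * x = b) ↔ ∃ y : ZMod p, y ^ n = PadicInt.toZMod b := by
  have reduction :
      (X ^ n + C a * X - C b).map PadicInt.toZMod = X ^ n - C (PadicInt.toZMod b) := by
    simp [toZMod_eq_zero_iff_norm_lt_one.mpr ha]
  rw [← exists_unit_eval_eq_zero_iff_exists_pow_eq hn
    (toZMod_ne_zero_iff_norm_eq_one.mpr hb) reduction]
  simp [sub_eq_zero]

end PadicIntegers

theorem valuation_eq_zero_of_norm_eq_one {p : ℕ} [Fact p.Prime] {b : ℚ_[p]} (hb : ‖b‖ = 1) :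
    b.valuation = 0 := by
  have b_ne_zero : b ≠ 0 := norm_ne_zero_iff.mp (hb ▸ one_ne_zero)
  have one_lt_p : (1 : ℝ) < p := mod_cast (Fact.out : p.Prime).one_lt
  rw [Padic.norm_eq_zpow_neg_valuation b_ne_zero,
    zpow_eq_one_iff_right₀ (zero_le_one.trans one_lt_p.le) one_lt_p.ne', neg_eq_zero] at hb
  exact hb

theorem stmt_6_general {p : ℕ} [Fact p.Prime] {n : ℕ} (hn : ¬p ∣ n) {a b : ℚ_[p]}
    (ha : ‖a‖ < 1) (hb : ‖b‖ = 1) {b0 : ℕ} (hdigit : ‖b - b0‖ < 1) :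
    (∃ x : ℚ_[p], ‖x‖ = 1 ∧ x ^ n + a * x = b) ↔
      (b0 : ZMod p) ^ ((p - 1) / n.gcd (p - 1)) = 1 := by
  obtain ⟨a, rfl⟩ : ∃ a₁ : ℤ_[p], (a₁ : ℚ_[p]) = a := ⟨⟨a, ha.le⟩, rfl⟩
  obtain ⟨b, rfl⟩ : ∃ b₁ : ℤ_[p], (b₁ : ℚ_[p]) = b := ⟨⟨b, hb.le⟩, rfl⟩
  have residue_b : PadicInt.toZMod b = b0 := by
    rw [← sub_eq_zero, ← map_natCast PadicInt.toZMod, ← map_sub, toZMod_eq_zero_iff_norm_lt_one]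
    exact mod_cast hdigit
  have n_ne_zero : n ≠ 0 := fun h ↦ hn (h ▸ dvd_zero p)
  have integral_iff : (∃ x : ℚ_[p], ‖x‖ = 1 ∧ x ^ n + a * x = b) ↔
      ∃ x : ℤ_[p], ‖x‖ = 1 ∧ x ^ n + a * x = b :=
    ⟨fun ⟨x, hx, h⟩ ↦ ⟨⟨x, hx.le⟩, hx, Subtype.ext h⟩,
      fun ⟨x, hx, h⟩ ↦ ⟨x, hx, mod_cast congrArg Subtype.val h⟩⟩
  rw [integral_iff, exists_unit_pow_add_mul_eq_iff_exists_pow_eq hn ha hb,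
    exists_pow_eq_iff_pow_card_div_gcd_eq_one n_ne_zero
      (toZMod_ne_zero_iff_norm_eq_one.mpr hb), residue_b, Nat.card_zmod]

/-- For a prime `p > 3` and nonzero `a b : ℚ_p` with `|a|_p < 1`, `|b|_p = 1`:
the equation `x³ + a·x = b` has a solution with `|x|_p = 1` iff
`b₀^((p−1)/gcd(3,p−1)) ≡ 1 (mod p)`, where `b₀` is the first digit of `b`. -/
theorem stmt_6 (p : ℕ) [Fact p.Prime] (hp : 3 < p)
    (a b : ℚ_[p]) (ha : a ≠ 0) (hb : b ≠ 0)
    (hna : ‖a‖ < 1) (hnb : ‖b‖ = 1)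
    (b0 : ℕ) (hb0l : 1 ≤ b0) (hb0u : b0 < p)
    (hdigit : ‖b * (p : ℚ_[p]) ^ (-b.valuation) - (b0 : ℚ_[p])‖ < 1) :
    (∃ x : ℚ_[p], ‖x‖ = 1 ∧ x ^ 3 + a * x = b) ↔
      (b0 : ZMod p) ^ ((p - 1) / Nat.gcd 3 (p - 1)) = 1 :=
  stmt_6_general (Nat.not_dvd_of_pos_of_lt three_pos hp) hna hnb
    (by simpa [valuation_eq_zero_of_norm_eq_one hnb] using hdigit)
end

section
/- Let p > 3 be a prime, let a, b ∈ ℚ_p be nonzero with |a|_p = |b|_p = 1, let D = −4a³ − 27b², and suppose 0 < |D|_p < 1. Let d_0 be the first digit of D and v_p(D) its p-adic valuation. If v_p(D) is even and d_0^{(p−1)/2} ≡ 1 (mod p), then the equation x³ + a·x = b has exactly three distinct solutions x ∈ ℚ_p with |x|_p = 1. If v_p(D) is even and d_0^{(p−1)/2} ≢ 1 (mod p), or if v_p(D) is odd, then it has exactly one solution x ∈ ℚ_p with |x|_p = 1. -/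
/-!
Every solution in `ℚ_[p]` is automatically a unit. As `D ≡ 0`, the cubic has a simple root `-3b/a`
modulo `p`, so Hensel's lemma yields one root `x`. The cubic splits off `X - x`, and
`D = (-3x² - 4a)(3x² + a)²`, where the first factor is the discriminant of the quadratic cofactor.
Hence there are two further roots or none according to whether `D` is a square in `ℚ_[p]`,
which is decided by its valuation and, by Hensel's lemma and Euler's criterion, its first digit.
-/

open Polynomial IsLocalRing

section DepressedCubic

variable {R : Type*} [CommRing R] {a b x y : R}

theorem discr_eq_of_root (hx : x ^ 3 + a * x = b) :
    -4 * a ^ 3 - 27 * b ^ 2 = (-3 * x ^ 2 - 4 * a) * (3 * x ^ 2 + a) ^ 2 := by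
  rw [← hx]
  ring

variable [NoZeroDivisors R]

theorem linear_coeff_eq_of_roots_ne (hx : x ^ 3 + a * x = b) (hy : y ^ 3 + a * y = b)
    (hxy : x ≠ y) : a = -(x ^ 2 + x * y + y ^ 2) :=
  mul_left_cancel₀ (sub_ne_zero.2 hxy) (by linear_combination hx - hy)

theorem const_coeff_eq_of_roots_ne (hx : x ^ 3 + a * x = b) (hy : y ^ 3 + a * y = b)
    (hxy : x ≠ y) : b = -(x * y * (x + y)) := by
  rw [← hx, linear_coeff_eq_of_roots_ne hx hy hxy]
  ring

theorem discr_eq_sq_of_roots_ne (hx : x ^ 3 + a * x = b) (hy : y ^ 3 + a * y = b)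
    (hxy : x ≠ y) :
    -4 * a ^ 3 - 27 * b ^ 2 = ((x - y) * (2 * x + y) * (x + 2 * y)) ^ 2 := by
  rw [const_coeff_eq_of_roots_ne hx hy hxy, linear_coeff_eq_of_roots_ne hx hy hxy]
  ring

theorem eq_of_roots_of_not_isSquare_discr (hx : x ^ 3 + a * x = b) (hy : y ^ 3 + a * y = b)
    (hD : ¬ IsSquare (-4 * a ^ 3 - 27 * b ^ 2)) : x = y :=
  by_contra fun hxy => hD (discr_eq_sq_of_roots_ne hx hy hxy ▸ .sq _)

theorem root_iff_of_roots_ne (hx : x ^ 3 + a * x = b) (hy : y ^ 3 + a * y = b)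
    (hxy : x ≠ y) (w : R) : w ^ 3 + a * w = b ↔ w = x ∨ w = y ∨ w = -(x + y) := by
  have factorization : w ^ 3 + a * w - b = (w - x) * ((w - y) * (w - -(x + y))) := by
    rw [const_coeff_eq_of_roots_ne hx hy hxy, linear_coeff_eq_of_roots_ne hx hy hxy]
    ring
  rw [← sub_eq_zero, factorization, mul_eq_zero, mul_eq_zero, sub_eq_zero, sub_eq_zero,
    sub_eq_zero]

end DepressedCubic

section DepressedCubicField

variable {K : Type*} [Field K] [NeZero (2 : K)] {a b x : K}

theorem exists_root_ne_of_isSquare_discr (hx : x ^ 3 + a * x = b)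
    (hD : -4 * a ^ 3 - 27 * b ^ 2 ≠ 0) (hsq : IsSquare (-4 * a ^ 3 - 27 * b ^ 2)) :
    ∃ y, y ≠ x ∧ y ^ 3 + a * y = b := by
  rw [discr_eq_of_root hx] at hD
  have derivative_ne_zero : 3 * x ^ 2 + a ≠ 0 := fun h => hD (by rw [h]; ring)
  obtain ⟨t, ht⟩ := hsq
  -- A square root of the discriminant of the quadratic cofactor `Y ^ 2 + x * Y + x ^ 2 + a`.
  obtain ⟨s, hs⟩ : ∃ s, s ^ 2 = -3 * x ^ 2 - 4 * a := by
    refine ⟨t / (3 * x ^ 2 + a), ?_⟩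
    rw [div_pow, div_eq_iff (pow_ne_zero 2 derivative_ne_zero), ← discr_eq_of_root hx, ht, sq]
  have h2 : (2 : K) ≠ 0 := two_ne_zero
  refine ⟨(-x + s) / 2, fun h => derivative_ne_zero ?_, ?_⟩
  · have hs3 : s = 3 * x := by
      rw [div_eq_iff h2] at h
      linear_combination h
    rw [hs3] at hs
    refine (mul_eq_zero.1 ?_).resolve_left (pow_ne_zero 2 h2)
    linear_combination hs
  · rw [← hx]
    field_simp
    linear_combination (s - 3 * x) * hs

theorem exists_three_roots_of_isSquare_discr (hx : x ^ 3 + a * x = b)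
    (hD : -4 * a ^ 3 - 27 * b ^ 2 ≠ 0) (hsq : IsSquare (-4 * a ^ 3 - 27 * b ^ 2)) :
    ∃ x y z : K, x ≠ y ∧ x ≠ z ∧ y ≠ z ∧ ∀ w, w ^ 3 + a * w = b ↔ w = x ∨ w = y ∨ w = z := by
  obtain ⟨y, hyx, hy⟩ := exists_root_ne_of_isSquare_discr hx hD hsq
  rw [discr_eq_sq_of_roots_ne hy hx hyx] at hD
  refine ⟨y, x, -(y + x), hyx, fun h => hD ?_, fun h => hD ?_, root_iff_of_roots_ne hy hx hyx⟩
  · rw [show 2 * y + x = 0 by linear_combination h]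
    ring
  · rw [show y + 2 * x = 0 by linear_combination h]
    ring

end DepressedCubicField

theorem norm_eq_one_of_cube_add_mul_eq {K : Type*} [NormedField K] [IsUltrametricDist K]
    {a b x : K} (ha : ‖a‖ ≤ 1) (hb : ‖b‖ = 1) (hx : x ^ 3 + a * x = b) : ‖x‖ = 1 := by
  have norm_mul_eq_one : ‖x‖ * ‖x ^ 2 + a‖ = 1 := by
    rw [← norm_mul, ← hb, ← hx]
    ring_nf
  rcases le_or_gt ‖x‖ 1 with hle | hgt
  · have : ‖x ^ 2 + a‖ ≤ 1 := (IsUltrametricDist.norm_add_le_max _ _).trans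
      (max_le (norm_pow x 2 ▸ pow_le_one₀ (norm_nonneg x) hle) ha)
    nlinarith [norm_nonneg x]
  · have one_lt_sq : 1 < ‖x ^ 2‖ := by simpa using one_lt_pow₀ hgt two_ne_zero
    have : ‖x ^ 2 + a‖ = ‖x ^ 2‖ := by
      have hlt := ha.trans_lt one_lt_sq
      rw [IsUltrametricDist.norm_add_eq_max_of_norm_ne_norm hlt.ne', max_eq_left hlt.le]
    nlinarith

theorem isUnit_three_mul_cube_add_discr {R : Type*} [CommRing R] [IsLocalRing R] {a b : R}
    (ha : IsUnit a) (hD : -4 * a ^ 3 - 27 * b ^ 2 ∈ maximalIdeal R) :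
    IsUnit (3 * a ^ 3 + (-4 * a ^ 3 - 27 * b ^ 2)) := by
  have cube_notMem : a ^ 3 ∉ maximalIdeal R := notMem_maximalIdeal.2 (ha.pow 3)
  by_contra hunit
  have three_mul_mem : 3 * a ^ 3 ∈ maximalIdeal R :=
    (Ideal.add_mem_iff_left _ hD).1 ((mem_maximalIdeal _).2 hunit)
  have three_mem : 3 ∈ maximalIdeal R :=
    (Ideal.IsPrime.mem_or_mem inferInstance three_mul_mem).resolve_right cube_notMem
  have cube_eq : a ^ 3 = 3 * (-a ^ 3 - 9 * b ^ 2) - (-4 * a ^ 3 - 27 * b ^ 2) := by ring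
  exact cube_notMem (cube_eq ▸ sub_mem (Ideal.mul_mem_right _ _ three_mem) hD)

section Henselian

variable {R : Type*} [CommRing R] [HenselianLocalRing R]

theorem exists_cube_add_mul_eq_of_discr_mem_maximalIdeal {a b : R} (ha : IsUnit a)
    (hD : -4 * a ^ 3 - 27 * b ^ 2 ∈ maximalIdeal R) : ∃ x, x ^ 3 + a * x = b := by
  obtain ⟨c, hc⟩ := ha.exists_right_inv
  let f : R[X] := X ^ 3 + C a * X - C b
  have eval_f (x : R) : f.eval x = x ^ 3 + a * x - b := by simp [f]
  have eval_derivative_f (x : R) : f.derivative.eval x = 3 * x ^ 2 + a := by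
    simp [f, two_add_one_eq_three]
  -- A depressed cubic of discriminant zero has the double root `3b/2a` and the simple root `-3b/a`.
  have eval_mem : f.eval (-3 * b * c) ∈ maximalIdeal R := by
    have : f.eval (-3 * b * c) = b * c ^ 3 * (-4 * a ^ 3 - 27 * b ^ 2) := by
      rw [eval_f]
      linear_combination (-3 * b + 4 * b * (a ^ 2 * c ^ 2 + a * c + 1)) * hc
    exact this ▸ Ideal.mul_mem_left _ _ hD
  have derivative_isUnit : IsUnit (f.derivative.eval (-3 * b * c)) := by
    have : f.derivative.eval (-3 * b * c) =
        -c ^ 2 * (3 * a ^ 3 + (-4 * a ^ 3 - 27 * b ^ 2)) := by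
      rw [eval_derivative_f]
      linear_combination -a * (a * c + 1) * hc
    have isUnit_c : IsUnit c := .of_mul_eq_one_right a hc
    exact this ▸ (isUnit_c.pow 2).neg.mul (isUnit_three_mul_cube_add_discr ha hD)
  obtain ⟨x, hx, -⟩ := HenselianLocalRing.is_henselian f (by simp only [f]; monicity!) _ eval_mem
    derivative_isUnit
  exact ⟨x, sub_eq_zero.1 (eval_f x ▸ hx)⟩

theorem isSquare_iff_isSquare_map_of_isUnit {k : Type*} [Field k] [NeZero (2 : k)]
    {φ : R →+* k} (hφ : Function.Surjective φ) {u : R} (hu : IsUnit u) :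
    IsSquare u ↔ IsSquare (φ u) := by
  refine ⟨fun h => h.map φ, ?_⟩
  rintro ⟨s, hs⟩
  obtain ⟨r, rfl⟩ := hφ s
  have ker_φ : RingHom.ker φ = maximalIdeal R := ker_eq_maximalIdeal φ hφ
  have isUnit_iff (y : R) : IsUnit y ↔ φ y ≠ 0 := by
    rw [Ne, ← RingHom.mem_ker, ker_φ, notMem_maximalIdeal]
  have φr_ne_zero : φ r ≠ 0 := fun h => (isUnit_iff u).1 hu (by simp [hs, h])
  let f : R[X] := X ^ 2 - C u
  have eval_mem : f.eval r ∈ maximalIdeal R := by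
    simp [← ker_φ, f, hs, sq]
  have derivative_isUnit : IsUnit (f.derivative.eval r) := by
    have : f.derivative.eval r = 2 * r := by simp [f, one_add_one_eq_two]
    rw [isUnit_iff, this, map_mul, map_ofNat]
    exact mul_ne_zero two_ne_zero φr_ne_zero
  obtain ⟨x, hx, -⟩ := HenselianLocalRing.is_henselian f (monic_X_pow_sub_C u two_ne_zero) r
    eval_mem derivative_isUnit
  have sq_eq : x ^ 2 - u = 0 := by simpa [f] using hx
  exact ⟨x, by linear_combination -sq_eq⟩

end Henselian

theorem isSquare_algebraMap_iff {R K : Type*} [CommRing R] [IsIntegrallyClosed R]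
    [Field K] [Algebra R K] [IsFractionRing R K] {r : R} :
    IsSquare (algebraMap R K r) ↔ IsSquare r := by
  refine ⟨?_, fun h => h.map (algebraMap R K)⟩
  rintro ⟨t, ht⟩
  obtain ⟨s, rfl⟩ := IsIntegrallyClosed.exists_algebraMap_eq_of_isIntegral_pow two_pos
    (sq t ▸ ht ▸ isIntegral_algebraMap)
  exact ⟨s, FaithfulSMul.algebraMap_injective R K (by rw [ht, map_mul])⟩

theorem isSquare_mul_zpow_iff {K : Type*} [Field K] {x c : K} (hc : c ≠ 0) {n : ℤ}
    (hn : Even n) : IsSquare (x * c ^ n) ↔ IsSquare x := by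
  obtain ⟨k, rfl⟩ := hn
  rw [zpow_add₀ hc]
  refine ⟨fun h => ?_, fun h => h.mul (.mul_self _)⟩
  rw [← mul_div_cancel_right₀ x (mul_self_ne_zero.2 (zpow_ne_zero k hc))]
  exact h.div (.mul_self _)

section Padic

variable {p : ℕ} [Fact p.Prime]

instance henselianLocalRing_padicInt : HenselianLocalRing ℤ_[p] where
  is_henselian f hf a₀ h₀ h₁ :=
    HenselianRing.is_henselian (I := maximalIdeal ℤ_[p]) f hf a₀ h₀ (h₁.map _)

theorem toZMod_eq_iff_norm_sub_lt_one {x y : ℤ_[p]} :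
    PadicInt.toZMod x = PadicInt.toZMod y ↔ ‖x - y‖ < 1 := by
  rw [← sub_eq_zero, ← map_sub, ← RingHom.mem_ker, PadicInt.ker_toZMod, mem_maximalIdeal,
    PadicInt.mem_nonunits]

theorem even_valuation_of_isSquare {x : ℚ_[p]} (hx : IsSquare x) : Even x.valuation := by
  obtain ⟨t, rfl⟩ := hx
  rw [← sq, Padic.valuation_pow]
  exact even_two_mul _

theorem norm_mul_zpow_neg_valuation {x : ℚ_[p]} (hx : x ≠ 0) :
    ‖x * (p : ℚ_[p]) ^ (-x.valuation)‖ = 1 := by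
  have hp : (p : ℝ) ≠ 0 := mod_cast (Fact.out : p.Prime).ne_zero
  rw [norm_mul, Padic.norm_eq_zpow_neg_valuation hx, Padic.norm_p_zpow, ← zpow_add₀ hp]
  simp

theorem isSquare_padicInt_iff_isSquare_toZMod (hp : p ≠ 2) {u : ℤ_[p]} (hu : IsUnit u) :
    IsSquare u ↔ IsSquare (PadicInt.toZMod u) := by
  have : NeZero (2 : ZMod p) := ⟨Ring.two_ne_zero (by rwa [ZMod.ringChar_zmod_n])⟩
  exact isSquare_iff_isSquare_map_of_isUnit (ZMod.ringHom_surjective _) hu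

theorem isSquare_padic_iff_of_norm_sub_lt_one (hp : p ≠ 2) {x : ℚ_[p]} (hx : x ≠ 0) {d : ℕ}
    (hd : ‖x * (p : ℚ_[p]) ^ (-x.valuation) - d‖ < 1) :
    IsSquare x ↔ Even x.valuation ∧ IsSquare (d : ZMod p) := by
  have hp0 : (p : ℚ_[p]) ≠ 0 := mod_cast (Fact.out : p.Prime).ne_zero
  let u : ℤ_[p]ˣ := PadicInt.mkUnits (norm_mul_zpow_neg_valuation hx)
  have toZMod_u : PadicInt.toZMod (u : ℤ_[p]) = d := by
    rw [← map_natCast PadicInt.toZMod d]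
    exact toZMod_eq_iff_norm_sub_lt_one.2 hd
  have isSquare_iff_of_even (hv : Even x.valuation) : IsSquare x ↔ IsSquare (d : ZMod p) := by
    rw [← isSquare_mul_zpow_iff hp0 hv.neg, ← toZMod_u,
      ← isSquare_padicInt_iff_isSquare_toZMod hp u.isUnit,
      ← isSquare_algebraMap_iff (R := ℤ_[p]) (K := ℚ_[p])]
    rfl
  exact (and_iff_right_of_imp even_valuation_of_isSquare).symm.trans
    (and_congr_right isSquare_iff_of_even)

theorem exists_padic_cube_add_mul_eq {a b : ℚ_[p]} (ha : ‖a‖ = 1) (hb : ‖b‖ ≤ 1)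
    (hD : ‖-4 * a ^ 3 - 27 * b ^ 2‖ < 1) : ∃ x, x ^ 3 + a * x = b := by
  obtain ⟨a, rfl⟩ : ∃ a' : ℤ_[p], (a' : ℚ_[p]) = a := ⟨⟨a, ha.le⟩, rfl⟩
  obtain ⟨b, rfl⟩ : ∃ b' : ℤ_[p], (b' : ℚ_[p]) = b := ⟨⟨b, hb⟩, rfl⟩
  have discr_mem : -4 * a ^ 3 - 27 * b ^ 2 ∈ maximalIdeal ℤ_[p] :=
    (mem_maximalIdeal _).2 (PadicInt.mem_nonunits.2 hD)
  obtain ⟨x, hx⟩ := exists_cube_add_mul_eq_of_discr_mem_maximalIdeal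
    (PadicInt.isUnit_iff.2 ha) discr_mem
  exact ⟨x, mod_cast congrArg PadicInt.Coe.ringHom hx⟩

end Padic

theorem pow_half_eq_one_iff_isSquare {p d : ℕ} [Fact p.Prime] (hp : p ≠ 2) (hd : ¬ p ∣ d) :
    (d : ZMod p) ^ ((p - 1) / 2) = 1 ↔ IsSquare (d : ZMod p) := by
  have hodd : p % 2 = 1 := (Fact.out : p.Prime).eq_two_or_odd.resolve_left hp
  rw [ZMod.euler_criterion p (mt (ZMod.natCast_eq_zero_iff d p).1 hd),
    show (p - 1) / 2 = p / 2 by omega]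

/-- For a prime `p > 3` and nonzero `a b : ℚ_p` with `|a|_p = |b|_p = 1`,
set `D = −4a³ − 27b²` and suppose `0 < |D|_p < 1`.  If `v_p(D)` is even and
`d₀^((p−1)/2) ≡ 1 (mod p)` then `x³ + a·x = b` has exactly three distinct solutions with
`|x|_p = 1`; if `v_p(D)` is even and `d₀^((p−1)/2) ≢ 1 (mod p)`, or `v_p(D)` is odd, then
it has exactly one such solution. -/
theorem stmt_12 (p : ℕ) [Fact p.Prime] (hp : 3 < p)
    (a b : ℚ_[p]) (ha : a ≠ 0) (hb : b ≠ 0)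
    (hna : ‖a‖ = 1) (hnb : ‖b‖ = 1)
    (D : ℚ_[p]) (hD : D = -4 * a ^ 3 - 27 * b ^ 2)
    (hD0 : 0 < ‖D‖) (hD1 : ‖D‖ < 1)
    (d0 : ℕ) (hd0l : 1 ≤ d0) (hd0u : d0 < p)
    (hdigit : ‖D * (p : ℚ_[p]) ^ (-D.valuation) - (d0 : ℚ_[p])‖ < 1) :
    (Even D.valuation → (d0 : ZMod p) ^ ((p - 1) / 2) = 1 →
      ∃ x y z : ℚ_[p], x ≠ y ∧ x ≠ z ∧ y ≠ z ∧
        (‖x‖ = 1 ∧ x ^ 3 + a * x = b) ∧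
        (‖y‖ = 1 ∧ y ^ 3 + a * y = b) ∧
        (‖z‖ = 1 ∧ z ^ 3 + a * z = b) ∧
        (∀ w : ℚ_[p], ‖w‖ = 1 → w ^ 3 + a * w = b → w = x ∨ w = y ∨ w = z)) ∧
    (Even D.valuation → (d0 : ZMod p) ^ ((p - 1) / 2) ≠ 1 →
      ∃! x : ℚ_[p], ‖x‖ = 1 ∧ x ^ 3 + a * x = b) ∧
    (Odd D.valuation → ∃! x : ℚ_[p], ‖x‖ = 1 ∧ x ^ 3 + a * x = b) := by
  have D_ne_zero : D ≠ 0 := norm_pos_iff.1 hD0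
  have isSquare_D_iff : IsSquare D ↔ Even D.valuation ∧ (d0 : ZMod p) ^ ((p - 1) / 2) = 1 := by
    rw [pow_half_eq_one_iff_isSquare (by omega) (Nat.not_dvd_of_pos_of_lt hd0l hd0u)]
    exact isSquare_padic_iff_of_norm_sub_lt_one (by omega) D_ne_zero hdigit
  subst hD
  have norm_root {x : ℚ_[p]} (hx : x ^ 3 + a * x = b) : ‖x‖ = 1 :=
    norm_eq_one_of_cube_add_mul_eq hna.le hnb hx
  obtain ⟨x, hx⟩ := exists_padic_cube_add_mul_eq hna hnb.le hD1
  have unique (hsq : ¬ IsSquare (-4 * a ^ 3 - 27 * b ^ 2)) :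
      ∃! x : ℚ_[p], ‖x‖ = 1 ∧ x ^ 3 + a * x = b :=
    ⟨x, ⟨norm_root hx, hx⟩, fun y hy => eq_of_roots_of_not_isSquare_discr hy.2 hx hsq⟩
  refine ⟨fun heven hpow => ?_, fun _ hpow => unique fun h => hpow (isSquare_D_iff.1 h).2,
    fun hodd => unique fun h => Int.not_even_iff_odd.2 hodd (isSquare_D_iff.1 h).1⟩
  obtain ⟨x, y, z, hxy, hxz, hyz, root_iff⟩ :=
    exists_three_roots_of_isSquare_discr hx D_ne_zero (isSquare_D_iff.2 ⟨heven, hpow⟩)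
  have is_root {w : ℚ_[p]} (hw : w = x ∨ w = y ∨ w = z) : ‖w‖ = 1 ∧ w ^ 3 + a * w = b :=
    ⟨norm_root ((root_iff w).2 hw), (root_iff w).2 hw⟩
  exact ⟨x, y, z, hxy, hxz, hyz, is_root (.inl rfl), is_root (.inr (.inl rfl)),
    is_root (.inr (.inr rfl)), fun w _ => (root_iff w).1⟩
end

section
/- Let p > 3 be a prime, let q ≥ 3 be a natural number with |q|_p < 1, and let ρ ∈ ℚ_p with |ρ|_p = 1 and |ρ − 1|_p < 1. If x ∈ ℚ_p satisfies x³ − A·x² − B·x + C = 0, then x ∈ E_p if and only if |x − A/3|_p < 1. -/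
/-!
The centre `A / 3` lies in the open unit ball around `1`, because
`A / 3 - 1 = (ρ - 1) ^ 2 * (ρ + 2) / 3 - q`. In an ultrametric space every point of a ball is a
centre, so `‖x - A / 3‖ < 1` says the same as `‖x - 1‖ < 1`. For `p ≠ 2` this is in turn membership
of `E_p`, since no `p`-adic norm lies strictly between `p⁻¹` and `1`, and the radius
`p ^ (-1 / (p - 1))` does.
-/

theorem norm_sub_lt_iff_of_norm_sub_lt {E : Type*} [SeminormedAddCommGroup E]
    [IsUltrametricDist E] {a b : E} {r : ℝ} (hab : ‖a - b‖ < r) (x : E) :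
    ‖x - a‖ < r ↔ ‖x - b‖ < r := by
  simp only [← mem_ball_iff_norm] at hab ⊢
  rw [IsUltrametricDist.ball_eq_of_mem hab]

section Padic

variable {p : ℕ} [Fact p.Prime] {y : ℚ_[p]}

theorem padic_norm_le_inv_of_norm_lt_one (hy : ‖y‖ < 1) : ‖y‖ ≤ (p : ℝ)⁻¹ := by
  simpa using (Padic.norm_le_pow_iff_norm_lt_pow_add_one y (-1)).2 (by simpa using hy)

theorem padic_norm_le_norm_prime_of_norm_lt_one {l : ℕ} (hl : l.Prime) (hy : ‖y‖ < 1) :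
    ‖y‖ ≤ ‖(l : ℚ_[p])‖ := by
  obtain rfl | hne := eq_or_ne p l
  · simpa using padic_norm_le_inv_of_norm_lt_one hy
  · rw [Padic.norm_natCast_eq_one_iff.2 ((Nat.coprime_primes Fact.out hl).2 hne)]
    exact hy.le

theorem padic_norm_lt_rpow_iff_norm_lt_one (hp : p ≠ 2) :
    ‖y‖ < (p : ℝ) ^ (-(1 : ℝ) / ((p : ℝ) - 1)) ↔ ‖y‖ < 1 := by
  have two_lt : (2 : ℝ) < p := by
    exact_mod_cast (Fact.out : p.Prime).two_le.lt_of_ne' hp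
  have one_lt : (1 : ℝ) < p := one_lt_two.trans two_lt
  have radius_lt_one : (p : ℝ) ^ (-(1 : ℝ) / ((p : ℝ) - 1)) < 1 :=
    Real.rpow_lt_one_of_one_lt_of_neg one_lt (div_neg_of_neg_of_pos (by simp) (by linarith))
  have inv_lt_radius : (p : ℝ)⁻¹ < (p : ℝ) ^ (-(1 : ℝ) / ((p : ℝ) - 1)) := by
    rw [← Real.rpow_neg_one]
    refine Real.rpow_lt_rpow_of_exponent_lt one_lt ?_
    rw [lt_div_iff₀ (by linarith)]
    linarith
  exact ⟨fun h ↦ h.trans radius_lt_one,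
    fun h ↦ (padic_norm_le_inv_of_norm_lt_one h).trans_lt inv_lt_radius⟩

theorem padic_norm_eq_one_and_norm_sub_one_lt_rpow_iff (hp : p ≠ 2) :
    (‖y‖ = 1 ∧ ‖y - 1‖ < (p : ℝ) ^ (-(1 : ℝ) / ((p : ℝ) - 1))) ↔ ‖y - 1‖ < 1 := by
  rw [padic_norm_lt_rpow_iff_norm_lt_one hp, and_iff_right_iff_imp]
  intro h
  rw [← norm_one (α := ℚ_[p])] at h ⊢
  exact Padic.norm_eq_of_norm_sub_lt_right h

theorem norm_potts_coeff_div_three_sub_one_lt_one {q ρ : ℚ_[p]} (hq : ‖q‖ < 1)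
    (hρ : ‖ρ - 1‖ < 1) : ‖(ρ ^ 3 - 3 * ρ - 3 * q + 5) / 3 - 1‖ < 1 := by
  have expansion : (ρ ^ 3 - 3 * ρ - 3 * q + 5) / 3 - 1 =
      (ρ - 1) * ((ρ - 1) / 3 * (ρ - 1 + 3)) + -q := by ring
  have norm_three_le : ‖(3 : ℚ_[p])‖ ≤ 1 := IsUltrametricDist.norm_natCast_le_one ℚ_[p] 3
  -- For `p = 3` the denominator is absorbed by one factor `ρ - 1`, which is divisible by `3`.
  have norm_div_three_le : ‖(ρ - 1) / 3‖ ≤ 1 := by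
    rw [norm_div]
    exact div_le_one_of_le₀
      (mod_cast padic_norm_le_norm_prime_of_norm_lt_one Nat.prime_three hρ) (norm_nonneg _)
  have norm_add_three_le : ‖ρ - 1 + 3‖ ≤ 1 :=
    (Padic.nonarchimedean _ _).trans (max_le hρ.le norm_three_le)
  have norm_mul_lt : ‖(ρ - 1) * ((ρ - 1) / 3 * (ρ - 1 + 3))‖ < 1 := by
    rw [norm_mul, norm_mul]
    exact mul_lt_one_of_nonneg_of_lt_one_left (norm_nonneg _) hρ
      (mul_le_one₀ norm_div_three_le (norm_nonneg _) norm_add_three_le)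
  rw [expansion]
  exact (Padic.nonarchimedean _ _).trans_lt (max_lt norm_mul_lt (by rwa [norm_neg]))

end Padic

theorem stmt_14_general {p : ℕ} [Fact p.Prime] (hp : p ≠ 2) {q ρ A : ℚ_[p]} (hq : ‖q‖ < 1)
    (hρ : ‖ρ - 1‖ < 1) (hA : A = ρ ^ 3 - 3 * ρ - 3 * q + 5) (x : ℚ_[p]) :
    (‖x‖ = 1 ∧ ‖x - 1‖ < (p : ℝ) ^ (-(1 : ℝ) / ((p : ℝ) - 1))) ↔ ‖x - A / 3‖ < 1 := by
  have norm_center_sub_one : ‖A / 3 - 1‖ < 1 :=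
    hA ▸ norm_potts_coeff_div_three_sub_one_lt_one hq hρ
  rw [padic_norm_eq_one_and_norm_sub_one_lt_rpow_iff hp,
    norm_sub_lt_iff_of_norm_sub_lt norm_center_sub_one]

/-- For a prime `p > 3`, a natural number `q ≥ 3` with `|q|_p < 1` and
`ρ ∈ ℚ_p` with `|ρ|_p = 1`, `|ρ − 1|_p < 1`: if `x³ − A·x² − B·x + C = 0`, then
`x ∈ E_p` (i.e. `|x|_p = 1` and `|x − 1|_p < p^{−1/(p−1)}`) iff `|x − A/3|_p < 1`. -/
theorem stmt_14 (p : ℕ) [Fact p.Prime] (hp : 3 < p)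
    (q : ℕ) (hq : 3 ≤ q) (hqp : ‖(q : ℚ_[p])‖ < 1)
    (ρ : ℚ_[p]) (hρ : ‖ρ‖ = 1) (hρ1 : ‖ρ - 1‖ < 1)
    (A B C : ℚ_[p])
    (hA : A = ρ ^ 3 - 3 * ρ - 3 * (q : ℚ_[p]) + 5)
    (hB : B = ρ * (ρ - 3) ^ 2 + 9 * (q : ℚ_[p]) + 3 * ρ * (q : ℚ_[p]) * (ρ - 2)
      - 3 * (q : ℚ_[p]) ^ 2 - 7)
    (hC : C = ((q : ℚ_[p]) - 1) ^ 3)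
    (x : ℚ_[p]) (hx : x ^ 3 - A * x ^ 2 - B * x + C = 0) :
    (‖x‖ = 1 ∧ ‖x - 1‖ < (p : ℝ) ^ (-(1 : ℝ) / ((p : ℝ) - 1))) ↔ ‖x - A / 3‖ < 1 :=
  stmt_14_general (by omega) hqp hρ1 hA x
end

section
/- Let p > 3 be a prime, let q ≥ 3 be a natural number with |q|_p < 1, and let ρ ∈ ℚ_p with |ρ|_p = 1 and |ρ − 1|_p < 1. Then |α|_p = |ρ − 1|_p² and |β|_p = |ρ − 1|_p³, where α = −(B + A²/3) and β = (2/27)A³ + (A·B)/3 − C. -/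
/-!
Put `m = 1 - q` and `d = ρ - 1`. Recentred at `m`, the cubic is
`x³ - A x² - B x + C = (x - m)³ - 3 d² x (x - m) - d³ x (x + 1)`.
The numbers `α` and `-β` are its derivative and its value at `c = A / 3`, and `c = m + d² e` with
`e = (ρ + 2) / 3`. Substituting, `-α = d² (3 c + d (2 c + 1 - d² e))` and
`β = d³ (c (c + 1) + d (3 c e - d² e³))`. Since `d` and `q` lie in the maximal ideal, `c` is
congruent to `1`, so the cofactors of `d²` and `d³` are congruent to the units `3` and `2`.
-/

section Ultrametric

lemma norm_eq_of_norm_sub_lt_right {E : Type*} [SeminormedAddGroup E] [IsUltrametricDist E]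
    {u v : E} (h : ‖u - v‖ < ‖v‖) : ‖u‖ = ‖v‖ := by
  simpa [max_eq_right h.le] using IsUltrametricDist.norm_add_eq_max_of_norm_ne_norm h.ne

lemma norm_add_mul_eq_one {R : Type*} [SeminormedRing R] [IsUltrametricDist R] {u d x : R}
    (hu : ‖u‖ = 1) (hd : ‖d‖ < 1) (hx : ‖x‖ ≤ 1) : ‖u + d * x‖ = 1 := by
  have hdx : ‖d * x‖ < 1 :=
    (norm_mul_le d x).trans_lt (mul_lt_one_of_nonneg_of_lt_one_left (norm_nonneg d) hd hx)
  rw [← hu]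
  apply norm_eq_of_norm_sub_lt_right
  rwa [add_sub_cancel_left, hu]

lemma mem_integer_valuation_iff_norm_le_one {K : Type*} [NormedField K] [IsUltrametricDist K]
    {x : K} : x ∈ (NormedField.valuation (K := K)).integer ↔ ‖x‖ ≤ 1 := by
  rw [Valuation.mem_integer_iff, NormedField.valuation_apply, ← NNReal.coe_le_one, coe_nnnorm]

end Ultrametric

namespace PottsCubic

section CommRing

variable {R : Type*} [CommRing R]

/-- The coefficient `A` of the fixed-point cubic `x³ - A x² - B x + C`. -/
def quadCoeff (ρ q : R) : R := ρ ^ 3 - 3 * ρ - 3 * q + 5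

/-- The coefficient `B` of the fixed-point cubic `x³ - A x² - B x + C`. -/
def linCoeff (ρ q : R) : R :=
  ρ * (ρ - 3) ^ 2 + 9 * q + 3 * ρ * q * (ρ - 2) - 3 * q ^ 2 - 7

lemma linCoeff_eq (ρ q : R) :
    linCoeff ρ q = (ρ - 1) ^ 3 - 3 * (1 - q) * (ρ - 1) ^ 2 - 3 * (1 - q) ^ 2 := by
  rw [linCoeff]
  ring

end CommRing

section Field

variable {K : Type*} [Field K]

/-- The coefficient `α` of the depressed cubic `y³ + α y - β` obtained from the fixed-point cubic
by the shift `x = y + A / 3`. -/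
def depressedLinCoeff (ρ q : K) : K := -(linCoeff ρ q + quadCoeff ρ q ^ 2 / 3)

/-- The coefficient `β` of the depressed cubic `y³ + α y - β` obtained from the fixed-point cubic
by the shift `x = y + A / 3`. -/
def depressedConstCoeff (ρ q : K) : K :=
  2 / 27 * quadCoeff ρ q ^ 3 + quadCoeff ρ q * linCoeff ρ q / 3 - (q - 1) ^ 3

/-- The shift `A / 3` that depresses the fixed-point cubic, written so that its distance to `1` is
visible. -/
def center (ρ q : K) : K := 1 - q + (ρ - 1) ^ 2 * ((ρ + 2) / 3)

variable (ρ q : K)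

lemma quadCoeff_eq_three_mul_center (h3 : (3 : K) ≠ 0) : quadCoeff ρ q = 3 * center ρ q := by
  rw [quadCoeff, center]
  field_simp
  ring

lemma depressedLinCoeff_eq (h3 : (3 : K) ≠ 0) :
    depressedLinCoeff ρ q = -((ρ - 1) ^ 2 * (3 * center ρ q +
      (ρ - 1) * (2 * center ρ q + 1 - (ρ - 1) ^ 2 * ((ρ + 2) / 3)))) := by
  rw [depressedLinCoeff, quadCoeff_eq_three_mul_center ρ q h3, linCoeff_eq, center]
  field_simp
  ring

lemma depressedConstCoeff_eq (h3 : (3 : K) ≠ 0) :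
    depressedConstCoeff ρ q = (ρ - 1) ^ 3 * (center ρ q * (center ρ q + 1) +
      (ρ - 1) * (3 * center ρ q * ((ρ + 2) / 3) - (ρ - 1) ^ 2 * ((ρ + 2) / 3) ^ 3)) := by
  have h27 : (27 : K) = 3 ^ 3 := by norm_num
  rw [depressedConstCoeff, quadCoeff_eq_three_mul_center ρ q h3, linCoeff_eq, center, h27]
  field_simp
  ring

end Field

section Norm

variable {K : Type*} [NormedField K] [IsUltrametricDist K] {ρ q : K}

lemma norm_add_two_div_three_eq_one (h3 : ‖(3 : K)‖ = 1) (hρ : ‖ρ - 1‖ < 1) :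
    ‖(ρ + 2) / 3‖ = 1 := by
  have : ‖(3 : K) + (ρ - 1) * 1‖ = 1 := norm_add_mul_eq_one h3 hρ norm_one.le
  rw [norm_div, h3, div_one, ← this]
  ring_nf

lemma norm_center_sub_one_lt_one (h3 : ‖(3 : K)‖ = 1) (hq : ‖q‖ < 1) (hρ : ‖ρ - 1‖ < 1) :
    ‖center ρ q - 1‖ < 1 := by
  have hsq : ‖(ρ - 1) ^ 2 * ((ρ + 2) / 3)‖ < 1 := by
    rw [norm_mul, norm_add_two_div_three_eq_one h3 hρ, mul_one, norm_pow]
    exact pow_lt_one₀ (norm_nonneg _) hρ two_ne_zero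
  have hsum : center ρ q - 1 = -q + (ρ - 1) ^ 2 * ((ρ + 2) / 3) := by
    rw [center]
    ring
  rw [hsum]
  exact (IsUltrametricDist.norm_add_le_max _ _).trans_lt (max_lt (by rwa [norm_neg]) hsq)

lemma norm_center_eq_one (h3 : ‖(3 : K)‖ = 1) (hq : ‖q‖ < 1) (hρ : ‖ρ - 1‖ < 1) :
    ‖center ρ q‖ = 1 := by
  rw [← norm_one (α := K)]
  apply norm_eq_of_norm_sub_lt_right
  simpa only [norm_one] using norm_center_sub_one_lt_one h3 hq hρ

lemma norm_center_add_one_eq_one (h2 : ‖(2 : K)‖ = 1) (h3 : ‖(3 : K)‖ = 1) (hq : ‖q‖ < 1)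
    (hρ : ‖ρ - 1‖ < 1) : ‖center ρ q + 1‖ = 1 := by
  rw [← h2]
  apply norm_eq_of_norm_sub_lt_right
  rw [h2, show center ρ q + 1 - 2 = center ρ q - 1 by ring]
  exact norm_center_sub_one_lt_one h3 hq hρ

lemma norm_depressedLinCoeff (h3 : ‖(3 : K)‖ = 1) (hq : ‖q‖ < 1) (hρ : ‖ρ - 1‖ < 1) :
    ‖depressedLinCoeff ρ q‖ = ‖ρ - 1‖ ^ 2 := by
  have h30 : (3 : K) ≠ 0 := norm_ne_zero_iff.mp (h3 ▸ one_ne_zero)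
  have hlead : ‖3 * center ρ q‖ = 1 := by
    rw [norm_mul, h3, norm_center_eq_one h3 hq hρ, mul_one]
  have hrest : ‖2 * center ρ q + 1 - (ρ - 1) ^ 2 * ((ρ + 2) / 3)‖ ≤ 1 := by
    have hc := (norm_center_eq_one h3 hq hρ).le
    have hd := hρ.le
    have he := (norm_add_two_div_three_eq_one h3 hρ).le
    rw [← mem_integer_valuation_iff_norm_le_one] at hc hd he ⊢
    exact sub_mem (add_mem (mul_mem (ofNat_mem _ 2) hc) (one_mem _)) (mul_mem (pow_mem hd 2) he)
  rw [depressedLinCoeff_eq ρ q h30, norm_neg, norm_mul, norm_add_mul_eq_one hlead hρ hrest,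
    mul_one, norm_pow]

lemma norm_depressedConstCoeff (h2 : ‖(2 : K)‖ = 1) (h3 : ‖(3 : K)‖ = 1) (hq : ‖q‖ < 1)
    (hρ : ‖ρ - 1‖ < 1) : ‖depressedConstCoeff ρ q‖ = ‖ρ - 1‖ ^ 3 := by
  have h30 : (3 : K) ≠ 0 := norm_ne_zero_iff.mp (h3 ▸ one_ne_zero)
  have hlead : ‖center ρ q * (center ρ q + 1)‖ = 1 := by
    rw [norm_mul, norm_center_eq_one h3 hq hρ, norm_center_add_one_eq_one h2 h3 hq hρ, mul_one]
  have hrest : ‖3 * center ρ q * ((ρ + 2) / 3) - (ρ - 1) ^ 2 * ((ρ + 2) / 3) ^ 3‖ ≤ 1 := by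
    have hc := (norm_center_eq_one h3 hq hρ).le
    have hd := hρ.le
    have he := (norm_add_two_div_three_eq_one h3 hρ).le
    rw [← mem_integer_valuation_iff_norm_le_one] at hc hd he ⊢
    exact sub_mem (mul_mem (mul_mem (ofNat_mem _ 3) hc) he) (mul_mem (pow_mem hd 2) (pow_mem he 3))
  rw [depressedConstCoeff_eq ρ q h30, norm_mul, norm_add_mul_eq_one hlead hρ hrest, mul_one,
    norm_pow]

end Norm

end PottsCubic

theorem stmt_15_general {K : Type*} [NormedField K] [IsUltrametricDist K]
    (h2 : ‖(2 : K)‖ = 1) (h3 : ‖(3 : K)‖ = 1) (q : K) (hq : ‖q‖ < 1) (ρ : K) (hρ : ‖ρ - 1‖ < 1)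
    (A B C : K)
    (hA : A = ρ ^ 3 - 3 * ρ - 3 * q + 5)
    (hB : B = ρ * (ρ - 3) ^ 2 + 9 * q + 3 * ρ * q * (ρ - 2) - 3 * q ^ 2 - 7)
    (hC : C = (q - 1) ^ 3)
    (α β : K)
    (hα : α = -(B + A ^ 2 / 3))
    (hβ : β = (2 / 27) * A ^ 3 + A * B / 3 - C) :
    ‖α‖ = ‖ρ - 1‖ ^ 2 ∧ ‖β‖ = ‖ρ - 1‖ ^ 3 := by
  subst hα hβ hA hB hC
  exact ⟨PottsCubic.norm_depressedLinCoeff h3 hq hρ,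
    PottsCubic.norm_depressedConstCoeff h2 h3 hq hρ⟩

lemma padic_norm_natCast_eq_one_of_lt {p : ℕ} [Fact p.Prime] {n : ℕ} (hn : n ≠ 0) (hnp : n < p) :
    ‖(n : ℚ_[p])‖ = 1 :=
  Padic.norm_natCast_eq_one_iff.mpr (Nat.coprime_of_lt_prime hn hnp Fact.out)

/-- For a prime `p > 3`, a natural number `q ≥ 3` with `|q|_p < 1` and
`ρ ∈ ℚ_p` with `|ρ|_p = 1`, `|ρ − 1|_p < 1`: with `α = −(B + A²/3)` and
`β = (2/27)A³ + AB/3 − C`, one has `|α|_p = |ρ − 1|_p²` and `|β|_p = |ρ − 1|_p³`. -/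
theorem stmt_15 (p : ℕ) [Fact p.Prime] (hp : 3 < p)
    (q : ℕ) (hq : 3 ≤ q) (hqp : ‖(q : ℚ_[p])‖ < 1)
    (ρ : ℚ_[p]) (hρ : ‖ρ‖ = 1) (hρ1 : ‖ρ - 1‖ < 1)
    (A B C : ℚ_[p])
    (hA : A = ρ ^ 3 - 3 * ρ - 3 * (q : ℚ_[p]) + 5)
    (hB : B = ρ * (ρ - 3) ^ 2 + 9 * (q : ℚ_[p]) + 3 * ρ * (q : ℚ_[p]) * (ρ - 2)
      - 3 * (q : ℚ_[p]) ^ 2 - 7)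
    (hC : C = ((q : ℚ_[p]) - 1) ^ 3)
    (α β : ℚ_[p])
    (hα : α = -(B + A ^ 2 / 3))
    (hβ : β = (2 / 27) * A ^ 3 + A * B / 3 - C) :
    ‖α‖ = ‖ρ - 1‖ ^ 2 ∧ ‖β‖ = ‖ρ - 1‖ ^ 3 :=
  stmt_15_general (padic_norm_natCast_eq_one_of_lt two_ne_zero (by lia))
    (padic_norm_natCast_eq_one_of_lt three_ne_zero hp) q hqp ρ hρ1 A B C hA hB hC α β hα hβ
end

section
/- Let p > 3 be a prime, let q ≥ 3 be a natural number and ρ ∈ ℚ_p with |q − 1|_p < 1 and |ρ|_p ≤ |q − 1|_p², and set g_ρ(x) = (ρ·x + q − 1)/(x + ρ + q − 2). Then: (i) for every x ∈ ℚ_p with |x|_p ≠ 1 one has x + ρ + q − 2 ≠ 0 and |g_ρ(x)|_p ≤ max{|q − 1|_p, |ρ|_p}; (ii) for every x ∈ ℚ_p with x + ρ + q − 2 ≠ 0, if |g_ρ(x)|_p > 1 then |x|_p = 1. -/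
/-!
The denominator is `x + d` with `d = ρ + (q - 1) - 1` of norm one, so for `‖x‖ ≠ ‖d‖` the
ultrametric inequality is sharp: `‖x + d‖ = max ‖x‖ ‖d‖`. The numerator is at most
`max ‖q - 1‖ ‖ρ‖ * max ‖x‖ 1`, which gives (i). That bound is less than one, so (ii) is the
contrapositive.
-/

section Ultrametric

variable {K : Type*}

theorem add_ne_zero_of_norm_ne_norm [SeminormedAddGroup K] {x y : K} (h : ‖x‖ ≠ ‖y‖) :
    x + y ≠ 0 := fun hxy ↦
  h (by rw [eq_neg_of_add_eq_zero_left hxy, norm_neg])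

theorem norm_sub_one_eq_one_of_norm_lt_one [SeminormedRing K] [NormOneClass K]
    [IsUltrametricDist K] {u : K} (hu : ‖u‖ < 1) : ‖u - 1‖ = 1 := by
  have norm_neg_one_eq : ‖(-1 : K)‖ = 1 := by rw [norm_neg, norm_one]
  rw [sub_eq_add_neg, IsUltrametricDist.norm_add_eq_max_of_norm_ne_norm
    (norm_neg_one_eq ▸ hu.ne), norm_neg_one_eq, max_eq_right hu.le]

theorem norm_mul_add_le_mul_max [NonUnitalSeminormedRing K] [IsUltrametricDist K] {a b x : K}
    {C r : ℝ} (ha : ‖a‖ ≤ C) (hb : ‖b‖ ≤ C * r) : ‖a * x + b‖ ≤ C * max ‖x‖ r := by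
  have hC : 0 ≤ C := (norm_nonneg a).trans ha
  refine (IsUltrametricDist.norm_add_le_max _ _).trans (max_le ?_ ?_)
  · calc ‖a * x‖ ≤ ‖a‖ * ‖x‖ := norm_mul_le a x
      _ ≤ C * max ‖x‖ r := by gcongr; exact le_max_left _ _
  · calc ‖b‖ ≤ C * r := hb
      _ ≤ C * max ‖x‖ r := by gcongr; exact le_max_right _ _

theorem norm_mul_add_div_add_le [NormedDivisionRing K] [IsUltrametricDist K] {a b d x : K}
    {C : ℝ} (ha : ‖a‖ ≤ C) (hb : ‖b‖ ≤ C * ‖d‖) (hx : ‖x‖ ≠ ‖d‖) :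
    ‖(a * x + b) / (x + d)‖ ≤ C := by
  rw [norm_div, div_le_iff₀ (norm_pos_iff.mpr (add_ne_zero_of_norm_ne_norm hx)),
    IsUltrametricDist.norm_add_eq_max_of_norm_ne_norm hx]
  exact norm_mul_add_le_mul_max ha hb

theorem stmt_17_general [NormedField K] [IsUltrametricDist K] {q ρ : K}
    (hq : ‖q - 1‖ < 1) (hρ : ‖ρ‖ < 1) :
    (∀ x : K, ‖x‖ ≠ 1 →
      x + ρ + q - 2 ≠ 0 ∧ ‖(ρ * x + q - 1) / (x + ρ + q - 2)‖ ≤ max ‖q - 1‖ ‖ρ‖) ∧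
    (∀ x : K, x + ρ + q - 2 ≠ 0 →
      1 < ‖(ρ * x + q - 1) / (x + ρ + q - 2)‖ → ‖x‖ = 1) := by
  set d : K := ρ + (q - 1) - 1 with hd
  have norm_d : ‖d‖ = 1 := norm_sub_one_eq_one_of_norm_lt_one
    ((IsUltrametricDist.norm_add_le_max _ _).trans_lt (max_lt hρ hq))
  have denom_eq (x : K) : x + ρ + q - 2 = x + d := by rw [hd]; ring
  simp only [denom_eq, add_sub_assoc (ρ * _) q 1]
  have norm_le (x : K) (hx : ‖x‖ ≠ 1) : ‖(ρ * x + (q - 1)) / (x + d)‖ ≤ max ‖q - 1‖ ‖ρ‖ :=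
    norm_mul_add_div_add_le (le_max_right _ _) (by simp [norm_d]) (by rwa [norm_d])
  refine ⟨fun x hx ↦ ⟨add_ne_zero_of_norm_ne_norm (by rwa [norm_d]), norm_le x hx⟩,
    fun x _ one_lt ↦ ?_⟩
  by_contra hx
  exact ((norm_le x hx).trans_lt (max_lt hq hρ)).not_gt one_lt

end Ultrametric

/-- For a prime `p > 3`, a natural number `q ≥ 3` and `ρ ∈ ℚ_p` with
`|q − 1|_p < 1` and `|ρ|_p ≤ |q − 1|_p²`, with `g_ρ(x) = (ρx + q − 1)/(x + ρ + q − 2)`: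
(i) if `|x|_p ≠ 1` then the denominator is nonzero and
`|g_ρ(x)|_p ≤ max{|q − 1|_p, |ρ|_p}`;
(ii) if the denominator is nonzero and `|g_ρ(x)|_p > 1`, then `|x|_p = 1`. -/
theorem stmt_17 (p : ℕ) [Fact p.Prime] (hp : 3 < p)
    (q : ℕ) (hq : 3 ≤ q) (ρ : ℚ_[p])
    (hq1 : ‖(q : ℚ_[p]) - 1‖ < 1) (hρ : ‖ρ‖ ≤ ‖(q : ℚ_[p]) - 1‖ ^ 2) :
    (∀ x : ℚ_[p], ‖x‖ ≠ 1 →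
      x + ρ + (q : ℚ_[p]) - 2 ≠ 0 ∧
      ‖(ρ * x + (q : ℚ_[p]) - 1) / (x + ρ + (q : ℚ_[p]) - 2)‖ ≤
        max ‖(q : ℚ_[p]) - 1‖ ‖ρ‖) ∧
    (∀ x : ℚ_[p], x + ρ + (q : ℚ_[p]) - 2 ≠ 0 →
      1 < ‖(ρ * x + (q : ℚ_[p]) - 1) / (x + ρ + (q : ℚ_[p]) - 2)‖ → ‖x‖ = 1) :=
  stmt_17_general hq1 (hρ.trans_lt (pow_lt_one₀ (norm_nonneg _) hq1 two_ne_zero))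
end

section
/- Let p > 3 be a prime, let q ≥ 3 be a natural number and ρ ∈ ℚ_p with |ρ|_p < |q − 1|_p² < 1. If −3 is a square in ℚ_p, then the cubic equation x³ − A·x² − B·x + C = 0 has exactly three distinct solutions in ℚ_p, exactly one of which, x₁, satisfies |x₁|_p < 1, while the other two solutions x₂, x₃ satisfy |x₂|_p = |x₃|_p = 1. If −3 is not a square in ℚ_p, then this cubic equation has exactly one solution in ℚ_p. -/
/-!
Put `t = q - 1`. Modulo `p` the cubic is `x (x - 1) ^ 2`, so Hensel's lemma gives a root `x₁` with
`‖x₁‖ = ‖t‖ ^ 3`. The discriminant of the quadratic cofactor is `A ^ 2 + 4 B + 2 A x₁ - 3 x₁ ^ 2`,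
where `A ^ 2 + 4 B = -3 t ^ 2 + O(4 ρ)`. Since `‖ρ‖ < ‖t‖ ^ 2`, it differs from `-3 t ^ 2` by less
than `‖4 t ^ 2‖`, hence is a square exactly when `-3` is. The estimates carry the factor `4` so that
they also hold for `p = 2`.
-/

section Algebra

variable {R : Type*} [CommRing R]

/-- The discriminant of `w ^ 2 + (x - a) * w + (x ^ 2 - a * x - b)`, the quotient of the cubic
`w ^ 3 - a * w ^ 2 - b * w + c` by `w - x` when `x` is a root; the constant term `c` drops out. -/
def cofactorDiscrim (a b x : R) : R :=
  discrim 1 (x - a) (x ^ 2 - a * x - b)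

lemma cofactorDiscrim_eq (a b x : R) :
    cofactorDiscrim a b x = a ^ 2 + 4 * b + x * (2 * a - 3 * x) := by
  rw [cofactorDiscrim, discrim]
  ring

variable [IsDomain R] {a b c x : R}

lemma cubic_eq_zero_iff_of_root (hx : x ^ 3 - a * x ^ 2 - b * x + c = 0) (w : R) :
    w ^ 3 - a * w ^ 2 - b * w + c = 0 ↔
      w = x ∨ 1 * (w * w) + (x - a) * w + (x ^ 2 - a * x - b) = 0 := by
  have factorization : w ^ 3 - a * w ^ 2 - b * w + c =
      (w - x) * (1 * (w * w) + (x - a) * w + (x ^ 2 - a * x - b)) := by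
    linear_combination hx
  rw [factorization, mul_eq_zero, sub_eq_zero]

lemma existsUnique_cubic_root_of_not_isSquare_discrim
    (hx : x ^ 3 - a * x ^ 2 - b * x + c = 0)
    (hD : ¬IsSquare (cofactorDiscrim a b x)) :
    ∃! w, w ^ 3 - a * w ^ 2 - b * w + c = 0 := by
  refine ⟨x, hx, fun w hw ↦ ((cubic_eq_zero_iff_of_root hx w).1 hw).resolve_right ?_⟩
  exact quadratic_ne_zero_of_discrim_ne_sq (fun s hs ↦ hD ⟨s, hs.trans (sq s)⟩) w

lemma exists_quadratic_roots_of_isSquare_discrim {K : Type*} [Field K] [NeZero (2 : K)]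
    {a b c : K} (ha : a ≠ 0) (hD : IsSquare (discrim a b c)) (hD₀ : discrim a b c ≠ 0) :
    ∃ y z : K, y ≠ z ∧ ∀ w, a * (w * w) + b * w + c = 0 ↔ w = y ∨ w = z := by
  obtain ⟨s, hs⟩ := hD
  refine ⟨(-b + s) / (2 * a), (-b - s) / (2 * a), fun heq ↦ hD₀ ?_, quadratic_eq_zero_iff ha hs⟩
  have h2a : 2 * a ≠ 0 := mul_ne_zero two_ne_zero ha
  have two_mul_s : 2 * s = 0 := by linear_combination (div_left_inj' h2a).1 heq
  rw [hs, (mul_eq_zero.1 two_mul_s).resolve_left two_ne_zero, mul_zero]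

lemma isSquare_mul_sq_iff {K : Type*} [Field K] {a b : K} (hb : b ≠ 0) :
    IsSquare (a * b ^ 2) ↔ IsSquare a := by
  refine ⟨fun h ↦ ?_, fun h ↦ h.mul (IsSquare.sq b)⟩
  simpa only [mul_div_cancel_right₀ a (pow_ne_zero 2 hb)] using h.div (IsSquare.sq b)

end Algebra

section Ultrametric

lemma norm_sub_le_of_norm_le {E : Type*} [SeminormedAddCommGroup E] [IsUltrametricDist E]
    {x y : E} {r : ℝ} (hx : ‖x‖ ≤ r) (hy : ‖y‖ ≤ r) : ‖x - y‖ ≤ r := by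
  rw [sub_eq_add_neg]
  exact (IsUltrametricDist.norm_add_le_max x (-y)).trans (max_le hx ((norm_neg y).trans_le hy))

variable {K : Type*} [NormedField K] [IsUltrametricDist K]

lemma norm_eq_one_of_monic_quadratic_root {b c w : K} (hb : ‖b‖ ≤ 1) (hc : ‖c‖ = 1)
    (hw : 1 * (w * w) + b * w + c = 0) : ‖w‖ = 1 := by
  have product : ‖w‖ * ‖w + b‖ = 1 := by
    rw [← norm_mul, ← hc, ← norm_neg c]
    congr 1
    linear_combination hw
  rcases lt_trichotomy ‖w‖ 1 with hlt | heq | hgt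
  · have sum_le : ‖w + b‖ ≤ 1 := (IsUltrametricDist.norm_add_le_max w b).trans (max_le hlt.le hb)
    nlinarith [norm_nonneg w]
  · exact heq
  · have sum_eq : ‖w + b‖ = ‖w‖ := by
      rw [IsUltrametricDist.norm_add_eq_max_of_norm_ne_norm (hb.trans_lt hgt).ne',
        max_eq_left (hb.trans hgt.le)]
    nlinarith

lemma norm_cofactor_of_norm_lt_one {a b x : K} (ha : ‖a‖ ≤ 1) (hb : ‖b‖ = 1) (hx : ‖x‖ < 1) :
    ‖x ^ 2 - a * x - b‖ = 1 := by
  have small : ‖x ^ 2 - a * x‖ < 1 := by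
    rw [show x ^ 2 - a * x = x * (x - a) by ring, norm_mul]
    exact mul_lt_one_of_nonneg_of_lt_one_left (norm_nonneg x) hx
      (norm_sub_le_of_norm_le hx.le ha)
  rw [sub_eq_add_neg, IsUltrametricDist.norm_add_eq_max_of_norm_ne_norm] <;>
    simp [hb, small.le, small.ne]

lemma exists_two_unit_cubic_roots_of_isSquare_discrim [NeZero (2 : K)] {a b c x : K}
    (ha : ‖a‖ ≤ 1) (hb : ‖b‖ = 1) (hx : x ^ 3 - a * x ^ 2 - b * x + c = 0) (hx₁ : ‖x‖ < 1)
    (hD : IsSquare (cofactorDiscrim a b x)) (hD₀ : cofactorDiscrim a b x ≠ 0) :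
    ∃ y z : K, y ≠ z ∧ ‖y‖ = 1 ∧ ‖z‖ = 1 ∧
      ∀ w, w ^ 3 - a * w ^ 2 - b * w + c = 0 ↔ w = x ∨ w = y ∨ w = z := by
  obtain ⟨y, z, hyz, roots⟩ := exists_quadratic_roots_of_isSquare_discrim one_ne_zero hD hD₀
  have unit_of_root : ∀ w, w = y ∨ w = z → ‖w‖ = 1 := fun w hw ↦
    norm_eq_one_of_monic_quadratic_root (norm_sub_le_of_norm_le hx₁.le ha)
      (norm_cofactor_of_norm_lt_one ha hb hx₁) ((roots w).2 hw)
  exact ⟨y, z, hyz, unit_of_root y (.inl rfl), unit_of_root z (.inr rfl),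
    fun w ↦ by rw [cubic_eq_zero_iff_of_root hx, roots]⟩

end Ultrametric

section Padic

variable {p : ℕ} [Fact p.Prime]

@[simp, norm_cast]
lemma padicInt_coe_ofNat (n : ℕ) [n.AtLeastTwo] :
    ((ofNat(n) : ℤ_[p]) : ℚ_[p]) = ofNat(n) :=
  map_ofNat PadicInt.Coe.ringHom n

lemma exists_padicInt_mul_eq {x y : ℚ_[p]} (h : ‖x‖ ≤ ‖y‖) : ∃ z : ℤ_[p], x = y * z := by
  rcases eq_or_ne y 0 with rfl | hy
  · exact ⟨0, by simpa using h⟩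
  · refine ⟨⟨x / y, ?_⟩, (mul_div_cancel₀ x hy).symm⟩
    rw [norm_div]
    exact div_le_one_of_le₀ h (norm_nonneg y)

lemma norm_mul_padicInt_le (x : ℚ_[p]) (z : ℤ_[p]) : ‖x * z‖ ≤ ‖x‖ := by
  rw [norm_mul]
  exact mul_le_of_le_one_right (norm_nonneg x) z.norm_le_one

lemma norm_le_norm_two_of_norm_lt_one {x : ℚ_[p]} (hx : ‖x‖ < 1) : ‖x‖ ≤ ‖(2 : ℚ_[p])‖ := by
  rcases eq_or_ne p 2 with rfl | hp
  · have norm_two : ‖(2 : ℚ_[2])‖ = (2 : ℝ) ^ (0 - 1 : ℤ) := by simpa using Padic.norm_p (p := 2)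
    rw [norm_two]
    exact (Padic.norm_lt_pow_iff_norm_le_pow_sub_one x 0).1 (by simpa using hx)
  · have norm_two : ‖((2 : ℕ) : ℚ_[p])‖ = 1 := Padic.norm_natCast_eq_one_iff.2 <|
      (Nat.coprime_primes Fact.out Nat.prime_two).2 hp
    exact hx.le.trans_eq norm_two.symm

lemma norm_sq_le_norm_four_of_norm_lt_one {x : ℚ_[p]} (hx : ‖x‖ < 1) :
    ‖x‖ ^ 2 ≤ ‖(4 : ℚ_[p])‖ := by
  rw [show (4 : ℚ_[p]) = 2 ^ 2 by norm_num, norm_pow]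
  gcongr
  exact norm_le_norm_two_of_norm_lt_one hx

lemma norm_four_le_one : ‖(4 : ℚ_[p])‖ ≤ 1 := by
  exact_mod_cast (4 : ℤ_[p]).norm_le_one

lemma norm_three_eq_one (hp : p ≠ 3) : ‖(3 : ℚ_[p])‖ = 1 := by
  exact_mod_cast Padic.norm_natCast_eq_one_iff.2 <|
    (Nat.coprime_primes Fact.out Nat.prime_three).2 hp

open Polynomial in
lemma isSquare_of_norm_sub_one_lt_norm_four {u : ℚ_[p]} (hu : ‖u - 1‖ < ‖(4 : ℚ_[p])‖) :
    IsSquare u := by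
  obtain ⟨v, hv⟩ := exists_padicInt_mul_eq (y := 1) (by simpa using hu.le.trans norm_four_le_one)
  obtain rfl : u = (1 + v : ℤ_[p]) := by push_cast; linear_combination hv
  have hensel_condition : ‖aeval (1 : ℤ_[p]) (X ^ 2 - C (1 + v))‖ <
      ‖aeval (1 : ℤ_[p]) (derivative (X ^ 2 - C (1 + v)))‖ ^ 2 := by
    have value : aeval (1 : ℤ_[p]) (X ^ 2 - C (1 + v)) = -v := by simp
    have slope : aeval (1 : ℤ_[p]) (derivative (X ^ 2 - C (1 + v))) ^ 2 = 4 := by norm_num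
    rw [← norm_pow, value, slope, norm_neg, PadicInt.norm_def, PadicInt.norm_def,
      padicInt_coe_ofNat]
    simpa using hu
  obtain ⟨z, hz, -⟩ := hensels_lemma hensel_condition
  have z_sq : z ^ 2 - (1 + v) = 0 := by simpa using hz
  exact ⟨z, congrArg Subtype.val ((sub_eq_zero.1 z_sq).symm.trans (sq z))⟩

lemma ne_zero_of_norm_sub_lt_norm_four_mul {u v : ℚ_[p]} (h : ‖u - v‖ < ‖4 * v‖) : u ≠ 0 := by
  rintro rfl
  rw [zero_sub, norm_neg, norm_mul] at h
  exact h.not_ge (mul_le_of_le_one_left (norm_nonneg v) norm_four_le_one)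

lemma isSquare_iff_of_norm_sub_lt_norm_four_mul {u v : ℚ_[p]} (h : ‖u - v‖ < ‖4 * v‖) :
    IsSquare u ↔ IsSquare v := by
  have hu : u ≠ 0 := ne_zero_of_norm_sub_lt_norm_four_mul h
  have hv : v ≠ 0 := right_ne_zero_of_mul (norm_pos_iff.1 ((norm_nonneg _).trans_lt h))
  have quotient : IsSquare (u / v) := by
    apply isSquare_of_norm_sub_one_lt_norm_four
    rwa [div_sub_one hv, norm_div, div_lt_iff₀ (norm_pos_iff.2 hv), ← norm_mul]
  constructor
  · intro hsq
    simpa only [div_div_cancel₀ hu] using hsq.div quotient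
  · intro hsq
    simpa only [div_mul_cancel₀ u hv] using quotient.mul hsq

open Polynomial in
lemma exists_cubic_root_norm_lt_one {a b c : ℤ_[p]} (hb : ‖b‖ = 1) (hc : ‖c‖ < 1) :
    ∃ x, x ^ 3 - a * x ^ 2 - b * x + c = 0 ∧ ‖x‖ < 1 := by
  let F : ℤ_[p][X] := X ^ 3 - C a * X ^ 2 - C b * X + C c
  have derivative_zero : ‖aeval (0 : ℤ_[p]) (derivative F)‖ = 1 := by simp [F, hb]
  obtain ⟨x, hx, hx₁, -⟩ := hensels_lemma (F := F) (a := 0) (by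
    rw [derivative_zero]
    simpa [F] using hc)
  exact ⟨x, by simpa [F] using hx, by simpa only [sub_zero, derivative_zero] using hx₁⟩

lemma exists_cubic_root_norm_eq {a b c : ℚ_[p]} (ha : ‖a‖ ≤ 1) (hb : ‖b‖ = 1) (hc : ‖c‖ < 1) :
    ∃ x, x ^ 3 - a * x ^ 2 - b * x + c = 0 ∧ ‖x‖ = ‖c‖ := by
  obtain ⟨x, hx, hx₁⟩ := exists_cubic_root_norm_lt_one (p := p) (a := ⟨a, ha⟩) (b := ⟨b, hb.le⟩)
    (c := ⟨c, hc.le⟩) hb hc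
  have root : (x : ℚ_[p]) ^ 3 - a * x ^ 2 - b * x + c = 0 := congrArg Subtype.val hx
  refine ⟨x, root, ?_⟩
  calc ‖(x : ℚ_[p])‖ = ‖x * (x ^ 2 - a * x - b : ℚ_[p])‖ := by
        rw [norm_mul, norm_cofactor_of_norm_lt_one ha hb hx₁, mul_one]
    _ = ‖-c‖ := by congr 1; linear_combination root
    _ = ‖c‖ := norm_neg c

end Padic

section Potts

/-- The coefficient `A` of the fixed-point cubic of the `q`-state Potts model on the Cayley tree of
order three. -/
def pottsA {R : Type*} [CommRing R] (ρ q : R) : R :=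
  ρ ^ 3 - 3 * ρ - 3 * q + 5

/-- The coefficient `B` of the fixed-point cubic of the `q`-state Potts model on the Cayley tree of
order three. -/
def pottsB {R : Type*} [CommRing R] (ρ q : R) : R :=
  ρ * (ρ - 3) ^ 2 + 9 * q + 3 * ρ * q * (ρ - 2) - 3 * q ^ 2 - 7

variable {p : ℕ} [Fact p.Prime] {ρ q x : ℚ_[p]}

lemma norm_pottsA_le_norm_two (hρ : ‖ρ‖ ≤ ‖(4 : ℚ_[p])‖) (hq : ‖q - 1‖ ≤ ‖(2 : ℚ_[p])‖) :
    ‖pottsA ρ q‖ ≤ ‖(2 : ℚ_[p])‖ := by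
  obtain ⟨σ, rfl⟩ := exists_padicInt_mul_eq hρ
  obtain ⟨τ, hτ⟩ := exists_padicInt_mul_eq hq
  have factorization :
      pottsA (4 * σ : ℚ_[p]) q = 2 * (1 - 3 * τ + 2 * σ * ((4 * σ) ^ 2 - 3) : ℤ_[p]) := by
    rw [pottsA, eq_add_of_sub_eq hτ]
    push_cast
    ring
  rw [factorization]
  exact norm_mul_padicInt_le 2 _

lemma norm_pottsA_le_one (hρ : ‖ρ‖ ≤ 1) (hq : ‖q - 1‖ ≤ 1) : ‖pottsA ρ q‖ ≤ 1 := by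
  obtain ⟨σ, rfl⟩ : ∃ σ : ℤ_[p], (σ : ℚ_[p]) = ρ := ⟨⟨ρ, hρ⟩, rfl⟩
  obtain ⟨τ, hτ⟩ : ∃ τ : ℤ_[p], (τ : ℚ_[p]) = q - 1 := ⟨⟨q - 1, hq⟩, rfl⟩
  have integral : pottsA (σ : ℚ_[p]) q = pottsA σ (τ + 1) := by
    simp [pottsA, hτ]
  exact integral ▸ PadicInt.norm_le_one _

lemma norm_pottsB_eq_one (hρ : ‖ρ‖ < 1) (hq : ‖q - 1‖ < 1) : ‖pottsB ρ q‖ = 1 := by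
  obtain ⟨σ, rfl⟩ : ∃ σ : ℤ_[p], (σ : ℚ_[p]) = ρ := ⟨⟨ρ, hρ.le⟩, rfl⟩
  obtain ⟨τ, hτ⟩ : ∃ τ : ℤ_[p], (τ : ℚ_[p]) = q - 1 := ⟨⟨q - 1, hq.le⟩, rfl⟩
  have expansion : pottsB (σ : ℚ_[p]) q - (-1) =
      (q - 1) * (3 * (1 - τ) : ℤ_[p]) +
        σ * ((σ - 3) ^ 2 + 3 * (1 + τ) * (σ - 2) : ℤ_[p]) := by
    rw [pottsB]
    push_cast [hτ]
    ring
  have close : ‖pottsB (σ : ℚ_[p]) q - (-1)‖ < ‖(-1 : ℚ_[p])‖ := by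
    rw [expansion, norm_neg, norm_one]
    exact (IsUltrametricDist.norm_add_le_max _ _).trans_lt <| max_lt
      ((norm_mul_padicInt_le _ _).trans_lt hq) ((norm_mul_padicInt_le _ _).trans_lt hρ)
  rw [Padic.norm_eq_of_norm_sub_lt_right close, norm_neg, norm_one]

lemma norm_pottsA_sq_add_four_mul_pottsB_le
    (hρ : ‖ρ‖ ≤ ‖(4 : ℚ_[p])‖) (hq : ‖q - 1‖ ≤ ‖(2 : ℚ_[p])‖) :
    ‖pottsA ρ q ^ 2 + 4 * pottsB ρ q + 3 * (q - 1) ^ 2‖ ≤ ‖4 * ρ‖ := by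
  obtain ⟨σ, rfl⟩ := exists_padicInt_mul_eq hρ
  obtain ⟨τ, hτ⟩ := exists_padicInt_mul_eq hq
  have factorization :
      pottsA (4 * σ : ℚ_[p]) q ^ 2 + 4 * pottsB (4 * σ : ℚ_[p]) q + 3 * (q - 1) ^ 2 =
        4 * (4 * σ) * ((1 - 3 * τ) * ((4 * σ) ^ 2 - 3) + σ * ((4 * σ) ^ 2 - 3) ^ 2
          + (4 * σ - 3) ^ 2 + 3 * (1 + 2 * τ) * (4 * σ - 2) : ℤ_[p]) := by
    rw [pottsA, pottsB, eq_add_of_sub_eq hτ]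
    push_cast
    ring
  rw [factorization]
  exact norm_mul_padicInt_le _ _

lemma norm_mul_two_mul_pottsA_sub_lt (hρ : ‖ρ‖ ≤ ‖(4 : ℚ_[p])‖) (hq : ‖q - 1‖ < 1)
    (hx : ‖x‖ < ‖q - 1‖ ^ 2) :
    ‖x * (2 * pottsA ρ q - 3 * x)‖ < ‖4 * (q - 1) ^ 2‖ := by
  have hq_four : ‖q - 1‖ ^ 2 ≤ ‖(4 : ℚ_[p])‖ := norm_sq_le_norm_four_of_norm_lt_one hq
  have hA : ‖2 * pottsA ρ q‖ ≤ ‖(4 : ℚ_[p])‖ := by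
    rw [show (4 : ℚ_[p]) = 2 * 2 by norm_num, norm_mul, norm_mul]
    gcongr
    exact norm_pottsA_le_norm_two hρ (norm_le_norm_two_of_norm_lt_one hq)
  have hx_four : ‖3 * x‖ ≤ ‖(4 : ℚ_[p])‖ := by
    rw [mul_comm, ← padicInt_coe_ofNat]
    exact (norm_mul_padicInt_le x 3).trans (hx.le.trans hq_four)
  calc ‖x * (2 * pottsA ρ q - 3 * x)‖ = ‖2 * pottsA ρ q - 3 * x‖ * ‖x‖ := by
        rw [norm_mul, mul_comm]
    _ ≤ ‖(4 : ℚ_[p])‖ * ‖x‖ := by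
        gcongr
        exact norm_sub_le_of_norm_le hA hx_four
    _ < ‖(4 : ℚ_[p])‖ * ‖q - 1‖ ^ 2 := by
        gcongr
        exact norm_pos_iff.2 (by norm_num)
    _ = ‖4 * (q - 1) ^ 2‖ := by rw [norm_mul, norm_pow]

lemma norm_cofactorDiscrim_sub_lt (hp : p ≠ 3) (hρ : ‖ρ‖ < ‖q - 1‖ ^ 2) (hq : ‖q - 1‖ < 1)
    (hx : ‖x‖ < ‖q - 1‖ ^ 2) :
    ‖cofactorDiscrim (pottsA ρ q) (pottsB ρ q) x - -3 * (q - 1) ^ 2‖ <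
      ‖4 * (-3 * (q - 1) ^ 2)‖ := by
  have hρ_four : ‖ρ‖ ≤ ‖(4 : ℚ_[p])‖ := hρ.le.trans (norm_sq_le_norm_four_of_norm_lt_one hq)
  have coefficient_part :
      ‖pottsA ρ q ^ 2 + 4 * pottsB ρ q + 3 * (q - 1) ^ 2‖ < ‖4 * (q - 1) ^ 2‖ := by
    refine (norm_pottsA_sq_add_four_mul_pottsB_le hρ_four
      (norm_le_norm_two_of_norm_lt_one hq)).trans_lt ?_
    rw [norm_mul, norm_mul, norm_pow]
    gcongr
    exact norm_pos_iff.2 (by norm_num)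
  have decomposition : cofactorDiscrim (pottsA ρ q) (pottsB ρ q) x - -3 * (q - 1) ^ 2 =
      (pottsA ρ q ^ 2 + 4 * pottsB ρ q + 3 * (q - 1) ^ 2) + x * (2 * pottsA ρ q - 3 * x) := by
    rw [cofactorDiscrim_eq]
    ring
  have norm_bound : ‖4 * (-3 * (q - 1) ^ 2)‖ = ‖4 * (q - 1) ^ 2‖ := by
    simp [norm_three_eq_one hp]
  rw [decomposition, norm_bound]
  exact (IsUltrametricDist.norm_add_le_max _ _).trans_lt
    (max_lt coefficient_part (norm_mul_two_mul_pottsA_sub_lt hρ_four hq hx))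

theorem stmt_18_general (hp : p ≠ 3) (hρ : ‖ρ‖ < ‖q - 1‖ ^ 2) (hq : ‖q - 1‖ ^ 2 < 1)
    {A B C : ℚ_[p]} (hA : A = pottsA ρ q) (hB : B = pottsB ρ q) (hC : C = (q - 1) ^ 3) :
    (IsSquare (-3 : ℚ_[p]) →
      ∃ x₁ x₂ x₃ : ℚ_[p], x₁ ≠ x₂ ∧ x₁ ≠ x₃ ∧ x₂ ≠ x₃ ∧
        x₁ ^ 3 - A * x₁ ^ 2 - B * x₁ + C = 0 ∧
        x₂ ^ 3 - A * x₂ ^ 2 - B * x₂ + C = 0 ∧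
        x₃ ^ 3 - A * x₃ ^ 2 - B * x₃ + C = 0 ∧
        (∀ w : ℚ_[p], w ^ 3 - A * w ^ 2 - B * w + C = 0 → w = x₁ ∨ w = x₂ ∨ w = x₃) ∧
        ‖x₁‖ < 1 ∧ ‖x₂‖ = 1 ∧ ‖x₃‖ = 1) ∧
    (¬IsSquare (-3 : ℚ_[p]) →
      ∃! x : ℚ_[p], x ^ 3 - A * x ^ 2 - B * x + C = 0) := by
  subst hA hB hC
  have hq₀ : 0 < ‖q - 1‖ := (sq_pos_iff.1 ((norm_nonneg ρ).trans_lt hρ)).lt_of_le' (norm_nonneg _)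
  have hq₁ : ‖q - 1‖ < 1 := (sq_lt_one_iff₀ (norm_nonneg _)).1 hq
  have norm_A : ‖pottsA ρ q‖ ≤ 1 := norm_pottsA_le_one (hρ.trans hq).le hq₁.le
  have norm_B : ‖pottsB ρ q‖ = 1 := norm_pottsB_eq_one (hρ.trans hq) hq₁
  have norm_C : ‖(q - 1) ^ 3‖ < ‖q - 1‖ ^ 2 := by
    rw [norm_pow]
    exact pow_lt_pow_right_of_lt_one₀ hq₀ hq₁ (by norm_num)
  obtain ⟨x, hx, norm_x⟩ := exists_cubic_root_norm_eq norm_A norm_B (norm_C.trans hq)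
  have hx₁ : ‖x‖ < 1 := norm_x.trans_lt (norm_C.trans hq)
  have close := norm_cofactorDiscrim_sub_lt hp hρ hq₁ (norm_x.trans_lt norm_C)
  have hD₀ := ne_zero_of_norm_sub_lt_norm_four_mul close
  have hD := (isSquare_iff_of_norm_sub_lt_norm_four_mul close).trans
    (isSquare_mul_sq_iff (norm_pos_iff.1 hq₀))
  refine ⟨fun h ↦ ?_, fun h ↦ existsUnique_cubic_root_of_not_isSquare_discrim hx (hD.not.2 h)⟩
  obtain ⟨y, z, hyz, norm_y, norm_z, roots⟩ :=
    exists_two_unit_cubic_roots_of_isSquare_discrim norm_A norm_B hx hx₁ (hD.2 h) hD₀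
  exact ⟨x, y, z, ne_of_apply_ne norm (norm_y ▸ hx₁.ne), ne_of_apply_ne norm (norm_z ▸ hx₁.ne), hyz,
    hx, (roots y).2 (.inr (.inl rfl)), (roots z).2 (.inr (.inr rfl)), fun w ↦ (roots w).1,
    hx₁, norm_y, norm_z⟩

end Potts

/-- For a prime `p > 3`, a natural number `q ≥ 3` and `ρ ∈ ℚ_p` with
`|ρ|_p < |q − 1|_p² < 1`: if `−3` is a square in `ℚ_p` then the cubic
`x³ − A·x² − B·x + C = 0` has exactly three distinct solutions, exactly one of which,
`x₁`, satisfies `|x₁|_p < 1`, the other two having absolute value 1; if `−3` is not a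
square in `ℚ_p`, the cubic has exactly one solution. -/
theorem stmt_18 (p : ℕ) [Fact p.Prime] (hp : 3 < p)
    (q : ℕ) (hq : 3 ≤ q) (ρ : ℚ_[p])
    (hρ : ‖ρ‖ < ‖(q : ℚ_[p]) - 1‖ ^ 2) (hq1 : ‖(q : ℚ_[p]) - 1‖ ^ 2 < 1)
    (A B C : ℚ_[p])
    (hA : A = ρ ^ 3 - 3 * ρ - 3 * (q : ℚ_[p]) + 5)
    (hB : B = ρ * (ρ - 3) ^ 2 + 9 * (q : ℚ_[p]) + 3 * ρ * (q : ℚ_[p]) * (ρ - 2)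
      - 3 * (q : ℚ_[p]) ^ 2 - 7)
    (hC : C = ((q : ℚ_[p]) - 1) ^ 3) :
    (IsSquare (-3 : ℚ_[p]) →
      ∃ x₁ x₂ x₃ : ℚ_[p], x₁ ≠ x₂ ∧ x₁ ≠ x₃ ∧ x₂ ≠ x₃ ∧
        x₁ ^ 3 - A * x₁ ^ 2 - B * x₁ + C = 0 ∧
        x₂ ^ 3 - A * x₂ ^ 2 - B * x₂ + C = 0 ∧
        x₃ ^ 3 - A * x₃ ^ 2 - B * x₃ + C = 0 ∧
        (∀ w : ℚ_[p], w ^ 3 - A * w ^ 2 - B * w + C = 0 → w = x₁ ∨ w = x₂ ∨ w = x₃) ∧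
        ‖x₁‖ < 1 ∧ ‖x₂‖ = 1 ∧ ‖x₃‖ = 1) ∧
    (¬IsSquare (-3 : ℚ_[p]) →
      ∃! x : ℚ_[p], x ^ 3 - A * x ^ 2 - B * x + C = 0) := by
  exact stmt_18_general hp.ne' hρ hq1 hA hB hC
end
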